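/- The root lattice E₈ has a Hermitian structure over O_L admitting an automorphism of order 5; that is, there exist a finitely generated O_L-module Λ_h with a positive definite L-Hermitian form h and an O_L-linear isometry of Λ_h of order 5, such that the ℤ-bilinear form Tr_{L/ℚ}(h(x,y)) makes Λ_h a positive definite even unimodular ℤ-lattice of rank 8 (necessarily isometric to E₈). -/

import Mathlib

open NumberField

set_option maxHeartbeats 1000000 in
theorem leg_aux (a b : ℕ) (ha : a.Prime) (hb : 0 < b) (hab : ¬ a ∣ b) (s r : ℤ)
    (hs : (b : ℤ) ∣ s ^ 2 + a) (hr : (a : ℤ) ∣ r ^ 2 - b) :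
    ∃ x w t : ℤ, t ≠ 0 ∧ x ^ 2 + a * w ^ 2 = b * t ^ 2 := by
  have : NeZero a := ⟨ha.ne_zero⟩
  have : NeZero b := ⟨hb.ne'⟩
  let S : Finset (ℕ × ℕ × ℕ) := Finset.range (Nat.sqrt (a * b) + 1) ×ˢ
    (Finset.range (Nat.sqrt b + 1) ×ˢ Finset.range (Nat.sqrt a + 1))
  let f : ℕ × ℕ × ℕ → ZMod b × ZMod a := fun p =>
    (((p.1 : ℤ) - s * (p.2.1 : ℤ) : ℤ), ((p.1 : ℤ) - r * (p.2.2 : ℤ) : ℤ))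
  have hcard : (Finset.univ : Finset (ZMod b × ZMod a)).card < S.card := by
    simp only [S, Finset.card_product, Finset.card_range, Finset.card_univ, Fintype.card_prod,
      ZMod.card]
    have h1 := Nat.lt_succ_sqrt (a * b)
    have h2 := Nat.lt_succ_sqrt b
    have h3 := Nat.lt_succ_sqrt a
    simp only [Nat.succ_eq_add_one] at h1 h2 h3
    set A := Nat.sqrt (a * b) + 1
    set B := Nat.sqrt b + 1
    set C := Nat.sqrt a + 1
    have h4 : (a * b) * (a * b) < (A * (B * C)) * (A * (B * C)) := by
      have e : (A * (B * C)) * (A * (B * C)) = (A * A) * ((B * B) * (C * C)) := by ring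
      rw [e]
      have : b * a ≤ (B * B) * (C * C) := Nat.mul_le_mul h2.le h3.le
      have hp : 0 < a * b := Nat.mul_pos ha.pos hb
      calc (a * b) * (a * b) < (A * A) * (a * b) := Nat.mul_lt_mul_of_pos_right h1 hp
        _ ≤ _ := Nat.mul_le_mul_left _ (by linarith [mul_comm a b])
    have := Nat.mul_self_lt_mul_self_iff.1 h4
    linarith [mul_comm a b]
  obtain ⟨p, hp, p', hp', hne, heq⟩ := Finset.exists_ne_map_eq_of_card_lt_of_maps_to hcard
    (f := f) (fun _ _ => Finset.mem_univ _)
  obtain ⟨x1, w1, t1⟩ := p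
  obtain ⟨x2, w2, t2⟩ := p'
  simp only [S, Finset.mem_product, Finset.mem_range, Nat.lt_succ_iff] at hp hp'
  simp only [f, Prod.mk.injEq, ZMod.intCast_eq_intCast_iff_dvd_sub] at heq
  obtain ⟨⟨k1, hk1⟩, ⟨k2, hk2⟩⟩ := heq
  set x : ℤ := x2 - x1 with hx
  set w : ℤ := w2 - w1 with hw
  set t : ℤ := t2 - t1 with ht
  have sqb : ∀ (n u v : ℕ), u ≤ Nat.sqrt n → v ≤ Nat.sqrt n → ((v : ℤ) - u) ^ 2 ≤ n := by
    intro n u v hu hv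
    have h1 : ((Nat.sqrt n : ℕ) : ℤ) * (Nat.sqrt n : ℕ) ≤ n := by exact_mod_cast Nat.sqrt_le n
    have hu' : (u : ℤ) ≤ (Nat.sqrt n : ℕ) := by exact_mod_cast hu
    have hv' : (v : ℤ) ≤ (Nat.sqrt n : ℕ) := by exact_mod_cast hv
    have : ((v : ℤ) - u) ^ 2 ≤ ((Nat.sqrt n : ℕ) : ℤ) ^ 2 := by
      apply sq_le_sq'  <;> linarith [Int.natCast_nonneg u, Int.natCast_nonneg v]
    nlinarith
  have bx : x ^ 2 ≤ (a * b : ℕ) := sqb _ _ _ hp.1 hp'.1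
  have bw : w ^ 2 ≤ (b : ℕ) := sqb _ _ _ hp.2.1 hp'.2.1
  have bt : t ^ 2 ≤ (a : ℕ) := sqb _ _ _ hp.2.2 hp'.2.2
  push_cast at bx
  have haZ : (0 : ℤ) < a := by exact_mod_cast ha.pos
  have hbZ : (0 : ℤ) < b := by exact_mod_cast hb
  have hnz : ¬ (x = 0 ∧ w = 0 ∧ t = 0) := by
    rintro ⟨h1, h2, h3⟩
    apply hne
    simp only [Prod.mk.injEq]
    refine ⟨?_, ?_, ?_⟩ <;> omega
  have d1 : (b : ℤ) ∣ x ^ 2 + a * w ^ 2 - b * t ^ 2 := by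
    obtain ⟨c, hc⟩ := hs
    have : x = s * w + b * k1 := by linarith
    refine ⟨2 * s * w * k1 + b * k1 ^ 2 + c * w ^ 2 - t ^ 2, ?_⟩
    rw [this]; linear_combination w ^ 2 * hc
  have d2 : (a : ℤ) ∣ x ^ 2 + a * w ^ 2 - b * t ^ 2 := by
    obtain ⟨c, hc⟩ := hr
    have : x = r * t + a * k2 := by linarith
    refine ⟨2 * r * t * k2 + a * k2 ^ 2 + c * t ^ 2 + w ^ 2, ?_⟩
    rw [this]; linear_combination t ^ 2 * hc
  have hcop : IsCoprime (b : ℤ) (a : ℤ) :=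
    (Nat.isCoprime_iff_coprime).2 ((Nat.Prime.coprime_iff_not_dvd ha).2 hab).symm
  obtain ⟨k, hk⟩ := hcop.mul_dvd d1 d2
  have hpz : Prime (a : ℤ) := Nat.prime_iff_prime_int.1 ha
  have nsq : ∀ y : ℤ, y ^ 2 ≠ a := by
    intro y hy
    have : (a : ℤ) ∣ y := hpz.dvd_of_dvd_pow (by rw [hy])
    obtain ⟨c, rfl⟩ := this
    have : (a : ℤ) * c ^ 2 = 1 := by
      apply mul_left_cancel₀ haZ.ne'; linarith
    have h1 : (a : ℤ) ∣ 1 := ⟨_, this.symm⟩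
    exact hpz.not_isUnit (isUnit_of_dvd_one h1)
  have nsq2 : ∀ y : ℤ, y ^ 2 ≠ a * b := by
    intro y hy
    have : (a : ℤ) ∣ y := hpz.dvd_of_dvd_pow (n := 2) (by rw [hy]; exact ⟨_, rfl⟩)
    obtain ⟨c, rfl⟩ := this
    have : (a : ℤ) * c ^ 2 = b := by
      apply mul_left_cancel₀ haZ.ne'; linarith
    exact hab (Int.natCast_dvd_natCast.1 ⟨_, this.symm⟩)
  have bt' : t ^ 2 < a := lt_of_le_of_ne bt (nsq t)
  have bx' : x ^ 2 < a * b := lt_of_le_of_ne bx (nsq2 x)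
  have hpos : (0 : ℤ) < b * a := mul_pos hbZ haZ
  have u1 : (a : ℤ) * w ^ 2 ≤ a * b := mul_le_mul_of_nonneg_left bw haZ.le
  have u2 : (b : ℤ) * t ^ 2 < b * a := mul_lt_mul_of_pos_left bt' hbZ
  have k2 : k < 2 := by
    by_contra h
    push Not at h
    nlinarith [mul_nonneg hbZ.le (sq_nonneg t)]
  have k0 : -1 < k := by
    by_contra h
    push Not at h
    nlinarith [mul_nonneg haZ.le (sq_nonneg w), sq_nonneg x]
  obtain h | h : k = 0 ∨ k = 1 := by omega
  · subst h
    refine ⟨x, w, t, ?_, by linarith⟩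
    intro h0
    apply hnz
    rw [h0] at hk
    have e : x ^ 2 + a * w ^ 2 = 0 := by linarith
    have e1 : x ^ 2 = 0 := by linarith [mul_nonneg haZ.le (sq_nonneg w), sq_nonneg x]
    have e2 : (a : ℤ) * w ^ 2 = 0 := by linarith [mul_nonneg haZ.le (sq_nonneg w), sq_nonneg x]
    refine ⟨pow_eq_zero_iff (two_ne_zero) |>.1 e1, ?_, h0⟩
    rcases mul_eq_zero.1 e2 with h | h
    · exact absurd h haZ.ne'
    · exact pow_eq_zero_iff (two_ne_zero) |>.1 h
  · subst h
    refine ⟨x * t - a * w, x + t * w, t ^ 2 + a, by positivity, ?_⟩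
    linear_combination (t ^ 2 + (a:ℤ)) * hk

theorem rat_rep (m : ℕ) (hm : 0 < m) (h5 : ¬ 5 ∣ m) :
    ∃ M X Y Z : ℤ, M ≠ 0 ∧ (m : ℤ) * M ^ 2 = X ^ 2 + 2 * Y ^ 2 + 10 * Z ^ 2 := by
  -- the prime q
  have hc : Nat.Coprime (4 * m) 5 := by
    rw [Nat.coprime_comm]
    refine (Nat.Prime.coprime_iff_not_dvd Nat.prime_five).2 ?_
    omega
  obtain ⟨c, hc1, hc2⟩ := Nat.chineseRemainder hc (4 * m - 1) 2
  have hcc : Nat.Coprime c (4 * m * 5) := by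
    apply Nat.Coprime.mul_right
    · rw [Nat.Coprime, hc1.gcd_eq]
      have : Nat.Coprime (4 * m - 1) (4 * m - 1 + 1) := by simp
      rwa [Nat.sub_add_cancel (by omega)] at this
    · rw [Nat.Coprime, hc2.gcd_eq]; rfl
  obtain ⟨q, hqgt, hq, hqm⟩ := Nat.forall_exists_prime_gt_and_modEq (4 * m + 5) (by omega : 4 * m * 5 ≠ 0) hcc
  have q1 : q ≡ 4 * m - 1 [MOD 4 * m] := (hqm.of_mul_right _).trans hc1
  have q2 : q ≡ 2 [MOD 5] := (hqm.of_mul_left _).trans hc2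
  have q3 : q % 4 = 3 := by
    have : q ≡ 4 * m - 1 [MOD 4] := q1.of_mul_right _
    unfold Nat.ModEq at this; omega
  have q5 : q % 5 = 2 := q2
  have : Fact q.Prime := ⟨hq⟩
  have hodd : Odd q := by rw [Nat.odd_iff]; omega
  have mdvd : (m : ℤ) ∣ (1 : ℤ) ^ 2 + q := by
    have : (4 * m : ℕ) ∣ q + 1 := by
      have h := q1.add_right 1
      rw [Nat.sub_add_cancel (by omega)] at h
      exact (Nat.modEq_zero_iff_dvd.1 (h.trans (by simp [Nat.ModEq])))
    have h2 : m ∣ q + 1 := (Dvd.intro_left 4 rfl).trans this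
    have h3 : (m : ℤ) ∣ ((q + 1 : ℕ) : ℤ) := by exact_mod_cast h2
    push_cast at h3
    rwa [one_pow, add_comm]
  have exroot : ∀ a : ℤ, jacobiSym a q = 1 → ∃ r : ℤ, (q : ℤ) ∣ r ^ 2 - a := by
    intro a ha
    rw [← jacobiSym.legendreSym.to_jacobiSym] at ha
    have h0 : (a : ZMod q) ≠ 0 := by
      intro h
      rw [(legendreSym.eq_zero_iff q a).2 h] at ha
      exact absurd ha (by norm_num)
    obtain ⟨y, hy⟩ := (legendreSym.eq_one_iff q h0).1 ha
    obtain ⟨r, rfl⟩ := ZMod.intCast_surjective y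
    refine ⟨r, ?_⟩
    rw [← ZMod.intCast_zmod_eq_zero_iff_dvd]
    push_cast
    rw [hy]; ring
  obtain ⟨r, hr⟩ : ∃ r : ℤ, (q : ℤ) ∣ r ^ 2 - (m : ℤ) := by
    apply exroot
    rw [jacobiSym.mod_right _ hodd]
    simp only [Int.natAbs_natCast]
    have : q % (4 * m) = 4 * m - 1 := by
      have h := q1
      unfold Nat.ModEq at h
      rw [h, Nat.mod_eq_of_lt (by omega)]
    rw [this]
    have e1 : jacobiSym ((4 * m : ℕ) : ℤ) (4 * m - 1) = 1 := by
      rw [jacobiSym.mod_left]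
      have : ((4 * m : ℕ) : ℤ) % ((4 * m - 1 : ℕ) : ℤ) = 1 % ((4 * m - 1 : ℕ) : ℤ) := by
        have : ((4 * m : ℕ) : ℤ) = 1 + ((4 * m - 1 : ℕ) : ℤ) := by
          rw [Nat.cast_sub (by omega)]; push_cast; ring
        rw [this, Int.add_emod_right]
      rw [this, ← jacobiSym.mod_left, jacobiSym.one_left]
    have e2 : ((4 * m : ℕ) : ℤ) = (2 : ℤ) ^ 2 * m := by push_cast; ring
    rw [e2, jacobiSym.mul_left, jacobiSym.sq_one' , one_mul] at e1
    · exact e1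
    · rw [Int.gcd_eq_natAbs]
      simp only [Int.natAbs_natCast]
      have : Nat.Coprime 2 (4 * m - 1) := by
        rw [Nat.coprime_two_left, Nat.odd_iff]; omega
      exact this
  have hqm' : ¬ q ∣ m := fun h => by have := Nat.le_of_dvd hm h; omega
  obtain ⟨x, w, t, ht, h1⟩ := leg_aux q m hq hm hqm' 1 r mdvd hr
  -- -5
  obtain ⟨s, hs⟩ : ∃ s : ℤ, (q : ℤ) ∣ s ^ 2 - (-5) := by
    apply exroot
    have : (-5 : ℤ) = (-1) * (5 : ℕ) := by norm_num
    rw [this, jacobiSym.mul_left, jacobiSym.at_neg_one hodd,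
      jacobiSym.quadratic_reciprocity_one_mod_four (by norm_num) hodd,
      ZMod.χ₄_nat_three_mod_four q3, jacobiSym.mod_left]
    have : ((q : ℕ) : ℤ) % ((5 : ℕ) : ℤ) = 2 := by omega
    rw [this]
    norm_num
  obtain ⟨s', hs'⟩ : ∃ s' : ℤ, ((2 * q : ℕ) : ℤ) ∣ s' ^ 2 + (5 : ℕ) := by
    have key : ∀ s : ℤ, (q : ℤ) ∣ s ^ 2 - (-5) → s % 2 = 1 → ((2 * q : ℕ) : ℤ) ∣ s ^ 2 + (5 : ℕ) := by
      intro s h hs1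
      push_cast
      apply IsCoprime.mul_dvd
      · have : Nat.Coprime 2 q := by rw [Nat.coprime_two_left]; exact hodd
        exact_mod_cast (Nat.isCoprime_iff_coprime.2 this)
      · obtain ⟨k, hk⟩ : ∃ k, s = 2 * k + 1 := ⟨s / 2, by omega⟩
        exact ⟨2 * k ^ 2 + 2 * k + 3, by rw [hk]; ring⟩
      · simpa using h
    rcases Int.emod_two_eq_zero_or_one s with h | h
    · refine ⟨s + q, key _ ?_ (by omega)⟩
      have : (s + q) ^ 2 - (-5) = (s ^ 2 - (-5)) + q * (2 * s + q) := by ring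
      rw [this]
      exact dvd_add hs (Dvd.intro _ rfl)
    · exact ⟨s, key _ hs h⟩
  have h2q : ((5 : ℕ) : ℤ) ∣ (2 : ℤ) ^ 2 - ((2 * q : ℕ) : ℤ) := by omega
  obtain ⟨y, z, v, hv, h2⟩ := leg_aux 5 (2 * q) Nat.prime_five (by have := hq.pos; omega)
    (by omega) s' 2 hs' h2q
  refine ⟨t * (2 * v), 2 * v * x, w * y, w * z, by positivity, ?_⟩
  push_cast at h2
  linear_combination (-4 * v^2) * h1 - 2 * w^2 * h2

abbrev QF := QuadraticAlgebra ℚ 1 1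
abbrev QB := Quaternion QF

/-- golden ratio -/
def gφ : QF := ⟨0, 1⟩

@[simp] theorem gφ_re : gφ.re = 0 := rfl
@[simp] theorem gφ_im : gφ.im = 1 := rfl

open scoped QuadraticAlgebra

/-- integers of Q(√5) -/
def OF : Subring QF where
  carrier := {z | ∃ m n : ℤ, z = ⟨m, n⟩}
  mul_mem' := by
    rintro _ _ ⟨m, n, rfl⟩ ⟨m', n', rfl⟩
    exact ⟨m * m' + n * n', m * n' + n * m' + n * n', by ext <;> simp⟩
  one_mem' := ⟨1, 0, by ext <;> simp⟩
  add_mem' := by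
    rintro _ _ ⟨m, n, rfl⟩ ⟨m', n', rfl⟩
    exact ⟨m + m', n + n', by ext <;> simp⟩
  zero_mem' := ⟨0, 0, by ext <;> simp⟩
  neg_mem' := by
    rintro _ ⟨m, n, rfl⟩
    exact ⟨-m, -n, by ext <;> simp⟩

theorem gφ_mem : gφ ∈ OF := ⟨0, 1, by ext <;> simp⟩

def mkI (a b c d : QF) : QB :=
  ⟨(1/2 : ℚ) • a, (1/2 : ℚ) • (a + b), (1/2 : ℚ) • (a + (gφ - 1) * b) + c,
    (1/2 : ℚ) • (a + gφ * b) + d⟩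

@[simp] theorem mkI_re (a b c d : QF) : (mkI a b c d).re = (1/2 : ℚ) • a := rfl
@[simp] theorem mkI_imI (a b c d : QF) : (mkI a b c d).imI = (1/2 : ℚ) • (a + b) := rfl
@[simp] theorem mkI_imJ (a b c d : QF) :
  (mkI a b c d).imJ = (1/2 : ℚ) • (a + (gφ - 1) * b) + c := rfl
@[simp] theorem mkI_imK (a b c d : QF) :
  (mkI a b c d).imK = (1/2 : ℚ) • (a + gφ * b) + d := rfl

theorem mkI_add (a b c d a' b' c' d' : QF) :
    mkI a b c d + mkI a' b' c' d' = mkI (a + a') (b + b') (c + c') (d + d') := by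
  ext <;> simp <;> ring

theorem mkI_neg (a b c d : QF) : - mkI a b c d = mkI (-a) (-b) (-c) (-d) := by
  ext <;> simp <;> ring

set_option maxHeartbeats 4000000 in
theorem mkI_mul (a b c d a' b' c' d' : QF) :
    mkI a b c d * mkI a' b' c' d' = mkI
      (-a*a' - gφ*a*b' - a*c' - a*d' - gφ*b*a' - 2*b*b' + (1-gφ)*b*c' - gφ*b*d' - c*a' + (1-gφ)*c*b' - 2*c*c' - d*a' - gφ*d*b' - 2*d*d')
      (2*a*a' + (1+gφ)*a*b' + 2*a*d' + gφ*b*a' + 2*b*b' - b*c' + (-1+2*gφ)*b*d' + 2*c*a' + (-1+2*gφ)*c*b' + 2*c*c' + 2*c*d' + d*b' - 2*d*c' + 2*d*d')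
      ((2-gφ)*a*a' + a*c' + (1-gφ)*a*d' + (-1+gφ)*b*a' + (2-gφ)*b*b' + (-1+gφ)*b*c' + (-2+gφ)*b*d' + (2-gφ)*c*a' + (-2+gφ)*c*b' + (2-gφ)*c*c' + (1-gφ)*c*d' + d*a' + d*b' + (-1+gφ)*d*c' + (2-gφ)*d*d')
      ((1-gφ)*a*a' - a*b' + a*c' + (1-gφ)*a*d' + (1-gφ)*b*b' + gφ*b*c' - b*d' - gφ*c*a' - 2*c*b' + (1-gφ)*c*c' - gφ*c*d' + d*a' + gφ*d*c' + (1-gφ)*d*d') := by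
  ext <;> simp <;> ring

theorem normSq_mkI (a b c d : QF) : Quaternion.normSq (mkI a b c d) =
    a*a + gφ*a*b + a*c + a*d + b*b + (-1+gφ)*b*c + gφ*b*d + c*c + d*d := by
  rw [Quaternion.normSq_def']
  ext <;> simp [pow_two] <;> ring

theorem one_mkI : (1 : QB) = mkI 2 (-2) (-2 + gφ) (-1 + gφ) := by
  apply QuaternionAlgebra.ext
  · show (1 : QF) = _
    ext <;> simp
  · show (0 : QF) = _
    ext <;> simp
  · show (0 : QF) = _
    ext <;> simp <;> norm_num
  · show (0 : QF) = _
    ext <;> simp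

theorem zero_mkI : (0 : QB) = mkI 0 0 0 0 := by
  apply QuaternionAlgebra.ext <;> show (0 : QF) = _ <;> ext <;> simp

/-- icosian ring -/
def Ico : Subring QB where
  carrier := {x | ∃ a ∈ OF, ∃ b ∈ OF, ∃ c ∈ OF, ∃ d ∈ OF, x = mkI a b c d}
  mul_mem' := by
    rintro _ _ ⟨a, ha, b, hb, c, hc, d, hd, rfl⟩ ⟨a', ha', b', hb', c', hc', d', hd', rfl⟩
    have h2 : (2 : QF) ∈ OF := ofNat_mem OF 2
    have hp := gφ_mem
    have h1 := OF.one_mem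
    refine ⟨_, ?_, _, ?_, _, ?_, _, ?_, mkI_mul _ _ _ _ _ _ _ _⟩ <;>
    repeat' first
      | assumption
      | apply Subring.add_mem
      | apply Subring.sub_mem
      | apply Subring.mul_mem
      | apply Subring.neg_mem
  one_mem' := ⟨2, ofNat_mem OF 2, -2, OF.neg_mem (ofNat_mem OF 2), -2 + gφ,
    OF.add_mem (OF.neg_mem (ofNat_mem OF 2)) gφ_mem, -1 + gφ,
    OF.add_mem (OF.neg_mem OF.one_mem) gφ_mem, one_mkI⟩
  add_mem' := by
    rintro _ _ ⟨a, ha, b, hb, c, hc, d, hd, rfl⟩ ⟨a', ha', b', hb', c', hc', d', hd', rfl⟩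
    exact ⟨_, OF.add_mem ha ha', _, OF.add_mem hb hb', _, OF.add_mem hc hc', _,
      OF.add_mem hd hd', mkI_add _ _ _ _ _ _ _ _⟩
  zero_mem' := ⟨0, OF.zero_mem, 0, OF.zero_mem, 0, OF.zero_mem, 0, OF.zero_mem,
    zero_mkI⟩
  neg_mem' := by
    rintro _ ⟨a, ha, b, hb, c, hc, d, hd, rfl⟩
    exact ⟨_, OF.neg_mem ha, _, OF.neg_mem hb, _, OF.neg_mem hc, _, OF.neg_mem hd,
      mkI_neg _ _ _ _⟩

theorem normSq_mem {x : QB} (hx : x ∈ Ico) : Quaternion.normSq x ∈ OF := by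
  obtain ⟨a, ha, b, hb, c, hc, d, hd, rfl⟩ := hx
  rw [normSq_mkI]
  have hp := gφ_mem
  have h1 := OF.one_mem
  repeat' first
      | assumption
      | apply Subring.add_mem
      | apply Subring.sub_mem
      | apply Subring.mul_mem
      | apply Subring.neg_mem

def mkB (a b c d : QF) : QB := ⟨a, b, c, d⟩
@[simp] theorem mkB_re (a b c d : QF) : (mkB a b c d).re = a := rfl
@[simp] theorem mkB_imI (a b c d : QF) : (mkB a b c d).imI = b := rfl
@[simp] theorem mkB_imJ (a b c d : QF) : (mkB a b c d).imJ = c := rfl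
@[simp] theorem mkB_imK (a b c d : QF) : (mkB a b c d).imK = d := rfl

/-- membership by parity conditions -/
theorem mem_Ico_of (U V : Fin 4 → ℤ)
    (h1 : (U 0 + U 1 + U 2 + U 3) % 2 = 0) (h2 : (V 0 + V 1 + V 2 + V 3) % 2 = 0)
    (h3 : (U 1 + U 2 + V 2 + V 3) % 2 = 0) (h4 : (V 1 + U 2 + U 3 + V 3) % 2 = 0) :
    mkB ⟨U 0 / 2, V 0 / 2⟩ ⟨U 1 / 2, V 1 / 2⟩ ⟨U 2 / 2, V 2 / 2⟩ ⟨U 3 / 2, V 3 / 2⟩ ∈ Ico := by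
  obtain ⟨c0, hc0⟩ : ∃ c0, U 2 = U 0 + (V 1 - V 0) - (U 1 - U 0) + 2 * c0 :=
    ⟨(U 2 - (U 0 + (V 1 - V 0) - (U 1 - U 0))) / 2, by omega⟩
  obtain ⟨c1, hc1⟩ : ∃ c0, V 2 = V 0 + (U 1 - U 0) + 2 * c0 :=
    ⟨(V 2 - (V 0 + (U 1 - U 0))) / 2, by omega⟩
  obtain ⟨d0, hd0⟩ : ∃ c0, U 3 = U 0 + (V 1 - V 0) + 2 * c0 :=
    ⟨(U 3 - (U 0 + (V 1 - V 0))) / 2, by omega⟩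
  obtain ⟨d1, hd1⟩ : ∃ c0, V 3 = V 0 + (U 1 - U 0) + (V 1 - V 0) + 2 * c0 :=
    ⟨(V 3 - (V 0 + (U 1 - U 0) + (V 1 - V 0))) / 2, by omega⟩
  refine ⟨_, ⟨U 0, V 0, rfl⟩, _, ⟨U 1 - U 0, V 1 - V 0, rfl⟩, _, ⟨c0, c1, rfl⟩, _,
    ⟨d0, d1, rfl⟩, ?_⟩
  rw [hc0, hc1, hd0, hd1]
  ext <;> simp <;> ring

theorem code_aux0 : ∀ s1 s2 s3 s4 : ZMod 2, ∃ a b : Fin 9,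
      (∑ i : Fin 8, if (decide (i.castSucc = a) || decide (i.castSucc = b)) then 1 else 0 : ℕ) ≤ 2 ∧
      (fun c : Fin 8 → ZMod 2 => (c 0 + c 1 + c 2 + c 3 = s1 ∧ c 4 + c 5 + c 6 + c 7 = s2 ∧
        c 1 + c 2 + c 6 + c 7 = s3 ∧ c 5 + c 2 + c 3 + c 7 = s4))
        (fun i => if (decide (i.castSucc = a) || decide (i.castSucc = b)) then 1 else 0) := by
  decide

theorem code_aux : ∀ s1 s2 s3 s4 : ZMod 2, ∃ S : Fin 8 → Bool,
      (∑ i, if S i then 1 else 0 : ℕ) ≤ 2 ∧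
      (fun c : Fin 8 → ZMod 2 => (c 0 + c 1 + c 2 + c 3 = s1 ∧ c 4 + c 5 + c 6 + c 7 = s2 ∧
        c 1 + c 2 + c 6 + c 7 = s3 ∧ c 5 + c 2 + c 3 + c 7 = s4))
        (fun i => if S i then 1 else 0) := by
  intro s1 s2 s3 s4
  obtain ⟨a, b, h⟩ := code_aux0 s1 s2 s3 s4
  exact ⟨fun i => decide (i.castSucc = a) || decide (i.castSucc = b), h⟩

/-- Euclidean-type covering -/
theorem cover (y : QB) : ∃ g ∈ Ico, (Quaternion.normSq (y - g)).re ≤ 7 / 8 := by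
  let Y : Fin 8 → ℚ := ![2 * y.re.re, 2 * y.imI.re, 2 * y.imJ.re, 2 * y.imK.re,
    2 * y.re.im, 2 * y.imI.im, 2 * y.imJ.im, 2 * y.imK.im]
  have hz : ∀ i, ∃ z z' : ℤ, (Y i - z) ^ 2 ≤ 1 / 4 ∧ (Y i - z') ^ 2 ≤ 1 ∧ z' % 2 = (z + 1) % 2 := by
    intro i
    have h := abs_le.1 (abs_sub_round (Y i))
    refine ⟨round (Y i), if 0 ≤ Y i - round (Y i) then round (Y i) + 1 else round (Y i) - 1,
      by nlinarith, ?_, ?_⟩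
    · split_ifs with h0
      · push_cast; nlinarith
      · push_cast; nlinarith
    · split_ifs <;> omega
  choose z z' hz1 hz2 hz3 using hz
  have code := code_aux
  obtain ⟨S, hS, hc⟩ := code (z 0 + z 1 + z 2 + z 3 : ℤ) (z 4 + z 5 + z 6 + z 7 : ℤ)
    (z 1 + z 2 + z 6 + z 7 : ℤ) (z 5 + z 2 + z 3 + z 7 : ℤ)
  let T : Fin 8 → ℤ := fun i => if S i then z' i else z i
  have hTm : ∀ i, ((T i : ℤ) : ZMod 2) = z i + if S i then 1 else 0 := by
    intro i
    simp only [T]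
    split_ifs
    · have : ((z' i : ℤ) : ZMod 2) = ((z i + 1 : ℤ) : ZMod 2) :=
        (ZMod.intCast_eq_intCast_iff _ _ 2).2 (hz3 i)
      rw [this]; push_cast; rfl
    · simp
  have hT : ∀ i, (Y i - T i) ^ 2 ≤ 1 / 4 + 3 / 4 * ((if S i then 1 else 0 : ℕ) : ℚ) := by
    intro i
    simp only [T]
    split_ifs
    · have := hz2 i; push_cast; linarith
    · have := hz1 i; push_cast; linarith
  have hsum : ∑ i, (Y i - T i) ^ 2 ≤ 7 / 2 := by
    refine (Finset.sum_le_sum fun i _ => hT i).trans ?_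
    rw [Finset.sum_add_distrib, ← Finset.mul_sum, ← Nat.cast_sum]
    have : ((∑ i, if S i then 1 else 0 : ℕ) : ℚ) ≤ 2 := Nat.cast_le.2 hS
    simp only [Finset.sum_const, Finset.card_univ, Fintype.card_fin, nsmul_eq_mul]
    linarith
  have two : (2 : ZMod 2) = 0 := rfl
  have par : ∀ i j k l : Fin 8, ∀ s : ZMod 2,
      s = ((z i + z j + z k + z l : ℤ) : ZMod 2) →
      ((if S i then 1 else 0 : ZMod 2) + (if S j then 1 else 0) + (if S k then 1 else 0)
        + (if S l then 1 else 0)) = s → (T i + T j + T k + T l) % 2 = 0 := by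
    intro i j k l s h1 h2
    have : ((T i + T j + T k + T l : ℤ) : ZMod 2) = ((0 : ℤ) : ZMod 2) := by
      push_cast
      rw [hTm, hTm, hTm, hTm]
      rw [h1] at h2
      push_cast at h2
      linear_combination h2 + ((z i + z j + z k + z l : ZMod 2)) * two
    exact (ZMod.intCast_eq_intCast_iff _ _ 2).1 this
  obtain ⟨c1, c2, c3, c4⟩ := hc
  refine ⟨_, mem_Ico_of ![T 0, T 1, T 2, T 3] ![T 4, T 5, T 6, T 7]
    (par 0 1 2 3 _ rfl c1) (par 4 5 6 7 _ rfl c2) (par 1 2 6 7 _ rfl c3) (par 5 2 3 7 _ rfl c4), ?_⟩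
  have e : (Quaternion.normSq (y - mkB ⟨T 0 / 2, T 4 / 2⟩ ⟨T 1 / 2, T 5 / 2⟩ ⟨T 2 / 2, T 6 / 2⟩
      ⟨T 3 / 2, T 7 / 2⟩)).re = (∑ i, (Y i - T i) ^ 2) / 4 := by
    rw [Quaternion.normSq_def']
    simp [Fin.sum_univ_eight, Y, pow_two]
    ring
  refine (le_of_eq e).trans ?_
  linarith

instance factQF : Fact (∀ r : ℚ, r ^ 2 ≠ 1 + 1 * r) := ⟨by
  intro r h
  have h5 : (2 * r - 1) ^ 2 = 5 := by linarith
  have hi : Irrational (Real.sqrt (5 : ℕ)) := Nat.prime_five.irrational_sqrt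
  apply hi
  refine ⟨|2 * r - 1|, ?_⟩
  rw [Rat.cast_abs, ← Real.sqrt_sq_eq_abs]
  congr 1
  exact_mod_cast h5⟩

def nn (x : QB) : ℚ := QuadraticAlgebra.norm (Quaternion.normSq x)

theorem nn_mul (x y : QB) : nn (x * y) = nn x * nn y := by simp [nn]

theorem normSq_re' (x : QB) : (Quaternion.normSq x).re =
    x.re.re ^ 2 + x.re.im ^ 2 + (x.imI.re ^ 2 + x.imI.im ^ 2) + (x.imJ.re ^ 2 + x.imJ.im ^ 2)
    + (x.imK.re ^ 2 + x.imK.im ^ 2) := by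
  rw [Quaternion.normSq_def']; simp [pow_two]

theorem normSq_im' (x : QB) : (Quaternion.normSq x).im =
    (2 * x.re.re * x.re.im + x.re.im ^ 2) + (2 * x.imI.re * x.imI.im + x.imI.im ^ 2)
    + (2 * x.imJ.re * x.imJ.im + x.imJ.im ^ 2) + (2 * x.imK.re * x.imK.im + x.imK.im ^ 2) := by
  rw [Quaternion.normSq_def']; simp [pow_two]; ring

theorem QB_ext_zero (x : QB) (h : (Quaternion.normSq x).re = 0) : x = 0 := by
  rw [normSq_re'] at h
  have H : ∀ a b : ℚ, a ^ 2 + b ^ 2 ≤ 0 → a = 0 ∧ b = 0 := by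
    intro a b hab
    constructor <;> nlinarith [sq_nonneg a, sq_nonneg b]
  have h0 := H x.re.re x.re.im (by nlinarith [sq_nonneg x.imI.re, sq_nonneg x.imI.im, sq_nonneg x.imJ.re, sq_nonneg x.imJ.im, sq_nonneg x.imK.re, sq_nonneg x.imK.im])
  have h1 := H x.imI.re x.imI.im (by nlinarith [sq_nonneg x.re.re, sq_nonneg x.re.im, sq_nonneg x.imJ.re, sq_nonneg x.imJ.im, sq_nonneg x.imK.re, sq_nonneg x.imK.im])
  have h2 := H x.imJ.re x.imJ.im (by nlinarith [sq_nonneg x.imI.re, sq_nonneg x.imI.im, sq_nonneg x.re.re, sq_nonneg x.re.im, sq_nonneg x.imK.re, sq_nonneg x.imK.im])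
  have h3 := H x.imK.re x.imK.im (by nlinarith [sq_nonneg x.imI.re, sq_nonneg x.imI.im, sq_nonneg x.imJ.re, sq_nonneg x.imJ.im, sq_nonneg x.re.re, sq_nonneg x.re.im])
  apply QuaternionAlgebra.ext <;> show _ = (0 : QF) <;> apply QuadraticAlgebra.ext
  exacts [h0.1, h0.2, h1.1, h1.2, h2.1, h2.2, h3.1, h3.2]

theorem normSq_eq0 (x : QB) (h : Quaternion.normSq x = 0) : x = 0 :=
  QB_ext_zero x (by rw [h]; rfl)

theorem nn_eq0 (x : QB) (h : nn x = 0) : x = 0 :=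
  normSq_eq0 x (QuadraticAlgebra.norm_eq_zero_iff_eq_zero.1 h)

theorem nn_nonneg (x : QB) : 0 ≤ nn x := by
  have e : nn x = (Quaternion.normSq x).re ^ 2 + (Quaternion.normSq x).re * (Quaternion.normSq x).im
      - (Quaternion.normSq x).im ^ 2 := by
    rw [nn, QuadraticAlgebra.norm_def]; ring
  have key : ∀ t : ℝ, t ^ 2 = t + 1 → 0 ≤ ((Quaternion.normSq x).re : ℝ) + (Quaternion.normSq x).im * t := by
    intro t ht
    rw [normSq_re', normSq_im']
    push_cast
    have : 0 ≤ ((x.re.re : ℝ) + x.re.im * t) ^ 2 + (x.imI.re + x.imI.im * t) ^ 2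
      + (x.imJ.re + x.imJ.im * t) ^ 2 + (x.imK.re + x.imK.im * t) ^ 2 := by positivity
    refine this.trans (le_of_eq ?_)
    linear_combination ((x.re.im : ℝ)^2 + (x.imI.im : ℝ)^2 + (x.imJ.im : ℝ)^2 + (x.imK.im : ℝ)^2) * ht
  have h1 := key _ Real.goldenRatio_sq
  have h2 := key _ Real.goldenConj_sq
  have : (0 : ℝ) ≤ nn x := by
    refine (mul_nonneg h1 h2).trans (le_of_eq ?_)
    rw [e]
    push_cast
    have a1 := Real.goldenRatio_add_goldenConj
    have a2 := Real.goldenRatio_mul_goldenConj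
    linear_combination ((Quaternion.normSq x).re * (Quaternion.normSq x).im : ℝ) * a1 +
      ((Quaternion.normSq x).im : ℝ) ^ 2 * a2
  exact_mod_cast this

theorem nn_le (x : QB) : nn x ≤ 5 / 4 * (Quaternion.normSq x).re ^ 2 := by
  rw [nn, QuadraticAlgebra.norm_def]
  nlinarith [sq_nonneg ((Quaternion.normSq x).im - (Quaternion.normSq x).re / 2)]

theorem normSq_re_nonneg (x : QB) : 0 ≤ (Quaternion.normSq x).re := by
  rw [normSq_re']; positivity

theorem cover' (y : QB) : ∃ g ∈ Ico, nn (y - g) < 1 := by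
  obtain ⟨g, hg, h⟩ := cover y
  refine ⟨g, hg, (nn_le _).trans_lt ?_⟩
  have := normSq_re_nonneg (y - g)
  nlinarith

theorem nn_nat {x : QB} (hx : x ∈ Ico) : ∃ n : ℕ, nn x = n := by
  obtain ⟨m, n, h⟩ := normSq_mem hx
  have h0 := nn_nonneg x
  rw [nn, h, QuadraticAlgebra.norm_def] at *
  have : (0 : ℤ) ≤ m * m + m * n - n * n := by
    have : (0 : ℚ) ≤ ((m * m + m * n - n * n : ℤ) : ℚ) := by push_cast; simpa using h0
    exact_mod_cast this
  refine ⟨(m * m + m * n - n * n).toNat, ?_⟩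
  rw [← Int.cast_natCast (R := ℚ), Int.toNat_of_nonneg this]
  push_cast; simp

theorem QB_mul_eq0 {x y : QB} (h : x * y = 0) : x = 0 ∨ y = 0 := by
  have : Quaternion.normSq x * Quaternion.normSq y = 0 := by rw [← map_mul, h, map_zero]
  rcases mul_eq_zero.1 this with h | h
  · exact Or.inl (normSq_eq0 _ h)
  · exact Or.inr (normSq_eq0 _ h)

theorem pid (J : AddSubgroup QB) (hJ : ∀ y ∈ J, y ∈ Ico) (hI : ∀ g ∈ Ico, ∀ y ∈ J, g * y ∈ J)
    (hne : ∃ y ∈ J, y ≠ 0) : ∃ x ∈ J, x ≠ 0 ∧ ∀ y ∈ J, ∃ g ∈ Ico, y = g * x := by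
  classical
  have hex : ∃ n : ℕ, ∃ x ∈ J, x ≠ 0 ∧ nn x = n := by
    obtain ⟨y, hy, hy0⟩ := hne
    obtain ⟨n, hn⟩ := nn_nat (hJ y hy)
    exact ⟨n, y, hy, hy0, hn⟩
  obtain ⟨x, hx, hx0, hxn⟩ := Nat.find_spec hex
  refine ⟨x, hx, hx0, fun y hy => ?_⟩
  have hr : Quaternion.normSq x ≠ 0 := fun h => hx0 (normSq_eq0 x h)
  obtain ⟨z, hz⟩ : ∃ z : QB, z = y * (((Quaternion.normSq x)⁻¹ : QF) : QB) * star x := ⟨_, rfl⟩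
  have hzx : z * x = y := by
    rw [hz, mul_assoc, Quaternion.star_mul_self, mul_assoc, ← Quaternion.coe_mul,
      inv_mul_cancel₀ hr, Quaternion.coe_one, mul_one]
  obtain ⟨g, hg, hlt⟩ := cover' z
  refine ⟨g, hg, ?_⟩
  by_contra hcon
  have hmem : y - g * x ∈ J := J.sub_mem hy (hI g hg x hx)
  have hne' : y - g * x ≠ 0 := sub_ne_zero.2 hcon
  obtain ⟨k, hk⟩ := nn_nat (hJ _ hmem)
  have hlt2 : nn (y - g * x) < nn x := by
    have : y - g * x = (z - g) * x := by rw [sub_mul, hzx]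
    rw [this, nn_mul]
    have hpos : 0 < nn x := lt_of_le_of_ne (nn_nonneg x) (fun h => hx0 (nn_eq0 x h.symm))
    nlinarith
  rw [hk, hxn] at hlt2
  exact Nat.find_min hex (by exact_mod_cast hlt2) ⟨_, hmem, hne', hk⟩

theorem QB_neg_mul (x y : QB) : -x * y = -(x * y) := neg_mul x y
theorem QB_neg_add (x y : QB) : -(x + y) = -x + -y := neg_add x y
theorem QB_sub_eq (x y : QB) : x - y = x + -y := sub_eq_add_neg x y

theorem embed (ε n D : ℤ) (hD : D ≠ 0) (W : QB) (hW : W ∈ Ico)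
    (htr : W + star W = ((ε * D : ℤ) : QB)) (hnm : Quaternion.normSq W = ((n * D ^ 2 : ℤ) : QF)) :
    ∃ g ∈ Ico, g + star g = ((ε : ℤ) : QB) ∧ Quaternion.normSq g = ((n : ℤ) : QF) := by
  let J : AddSubgroup QB :=
    { carrier := {y | ∃ p ∈ Ico, ∃ q ∈ Ico, y = p * (D : QB) + q * W}
      add_mem' := by
        rintro _ _ ⟨p, hp, q, hq, rfl⟩ ⟨p', hp', q', hq', rfl⟩
        exact ⟨p + p', Ico.add_mem hp hp', q + q', Ico.add_mem hq hq', by noncomm_ring⟩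
      zero_mem' := ⟨0, Ico.zero_mem, 0, Ico.zero_mem, by rw [zero_mul, zero_mul, add_zero]⟩
      neg_mem' := by
        rintro _ ⟨p, hp, q, hq, rfl⟩
        exact ⟨-p, Ico.neg_mem hp, -q, Ico.neg_mem hq, by rw [QB_neg_mul, QB_neg_mul, QB_neg_add]⟩ }
  have hDQ : (D : QB) ≠ 0 := by
    intro h
    apply hD
    have : ((D : QB).re).re = ((0 : QB).re).re := by rw [h]
    have h2 : ((D : QB).re).re = (D : ℚ) := by rw [Quaternion.re_intCast]; simp
    rw [h2] at this
    have h3 : (D : ℚ) = 0 := this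
    exact_mod_cast h3
  obtain ⟨x, hxJ, hx0, hgen⟩ := pid J
    (by
      rintro _ ⟨p, hp, q, hq, rfl⟩
      exact Ico.add_mem (Ico.mul_mem hp (intCast_mem Ico D)) (Ico.mul_mem hq hW))
    (by
      rintro g hg _ ⟨p, hp, q, hq, rfl⟩
      exact ⟨g * p, Ico.mul_mem hg hp, g * q, Ico.mul_mem hg hq, by noncomm_ring⟩)
    ⟨(D : QB), ⟨1, Ico.one_mem, 0, Ico.zero_mem, by rw [one_mul, zero_mul, add_zero]⟩, hDQ⟩
  obtain ⟨p, hp, q, hq, hxe⟩ := hxJ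
  have hWW : W * star W = ((n * D ^ 2 : ℤ) : QB) := by
    rw [Quaternion.self_mul_star, hnm, Quaternion.coe_intCast]
  have hW2 : W * W = (ε : QB) * D * W - (n : QB) * D * D := by
    have e : star W = ((ε * D : ℤ) : QB) - W := by rw [← htr]; abel
    rw [e, mul_sub] at hWW
    have c : W * ((ε * D : ℤ) : QB) = ((ε * D : ℤ) : QB) * W := (Int.cast_commute _ _).symm
    rw [c] at hWW
    have : W * W = ((ε * D : ℤ) : QB) * W - ((n * D ^ 2 : ℤ) : QB) := by rw [← hWW]; abel
    rw [this]; push_cast; rw [pow_two, mul_assoc (n : QB)]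
  obtain ⟨g, hg, hgx⟩ := hgen ((p + q * ε) * W - (q * n) * D)
    ⟨-(q * n), Ico.neg_mem (Ico.mul_mem hq (intCast_mem Ico n)), p + q * ε,
      Ico.add_mem hp (Ico.mul_mem hq (intCast_mem Ico ε)), by rw [QB_neg_mul, QB_sub_eq, add_comm]⟩
  have cD : ∀ a : QB, a * (D : QB) = D * a := fun a => (Int.cast_commute D a).symm
  have hxW : x * W = (D : QB) * (g * x) := by
    rw [← hgx]
    calc x * W = p * (D * W) + q * (W * W) := by rw [hxe]; noncomm_ring
      _ = (p + q * ε) * W * D - (q * n) * D * D := by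
        have h1 : (ε : QB) * D * W = ε * W * D := by rw [mul_assoc, ← cD W, mul_assoc]
        rw [hW2, ← cD W, h1, mul_sub, add_mul, add_mul]
        simp only [mul_assoc]
        abel
      _ = D * ((p + q * ε) * W - (q * n) * D) := by
        rw [← cD, sub_mul]
  have hr0 : x * star x ≠ 0 := by
    intro h
    rcases QB_mul_eq0 h with h | h
    · exact hx0 h
    · exact hx0 (star_eq_zero.1 h)
  have cr : ∀ a : QB, a * (x * star x) = (x * star x) * a := by
    intro a
    rw [Quaternion.self_mul_star]; exact (Quaternion.coe_commutes _ _).symm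
  refine ⟨g, hg, ?_, ?_⟩
  · have e1 : x * W * star x = D * (g * (x * star x)) := by rw [hxW]; noncomm_ring
    have e2 : x * star W * star x = D * (star g * (x * star x)) := by
      have := congrArg star e1
      simp only [star_mul, star_star] at this
      rw [← mul_assoc] at this
      rw [this, star_intCast, cD, ← cr]
    have e3 : x * (W + star W) * star x = D * ((g + star g) * (x * star x)) := by
      rw [mul_add, add_mul, e1, e2, ← mul_add, ← add_mul]
    have e3' : x * ((ε * D : ℤ) : QB) * star x = D * (ε * (x * star x)) := by
      rw [Int.cast_mul, ← mul_assoc, cD, mul_assoc, ← (Int.cast_commute ε x).eq, mul_assoc]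
    rw [htr, e3'] at e3
    have e4 : (D : QB) * ((g + star g - ε) * (x * star x)) = 0 := by
      rw [sub_mul, mul_sub, ← e3, sub_self]
    have e5 := ((QB_mul_eq0 e4).resolve_left hDQ)
    exact sub_eq_zero.1 ((QB_mul_eq0 e5).resolve_right hr0)
  · have e := congrArg Quaternion.normSq hxW
    simp only [map_mul, hnm, Quaternion.normSq_intCast] at e
    have hx' : Quaternion.normSq x ≠ 0 := fun h => hx0 (normSq_eq0 x h)
    have hD' : (D : QF) ≠ 0 := by exact_mod_cast hD
    have e1 : ((D : QF) ^ 2 * Quaternion.normSq x) * Quaternion.normSq g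
        = ((D : QF) ^ 2 * Quaternion.normSq x) * n := by
      push_cast at e
      linear_combination -e
    exact mul_left_cancel₀ (mul_ne_zero (pow_ne_zero 2 hD') hx') e1

theorem coord_uniq (ℓ : ℕ) (hℓpos : 0 < ℓ) {L : Type} [Field L] [NumberField L]
    (α : L) (hα : α ^ 2 = -(ℓ : L)) (p q p' q' : ℚ)
    (h : algebraMap ℚ L p + algebraMap ℚ L q * α = algebraMap ℚ L p' + algebraMap ℚ L q' * α) :
    p = p' ∧ q = q' := by
  have hq : q = q' := by
    by_contra hne
    have hne' : algebraMap ℚ L (q - q') ≠ 0 := by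
      rw [Ne, map_eq_zero]; exact sub_ne_zero.2 hne
    have e : α = algebraMap ℚ L ((p' - p) / (q - q')) := by
      rw [map_div₀, eq_div_iff hne', map_sub, map_sub]
      linear_combination h
    rw [e, ← map_pow] at hα
    have h2 : ((p' - p) / (q - q')) ^ 2 = -(ℓ : ℚ) := by
      apply (algebraMap ℚ L).injective
      rw [hα]; simp
    have h3 : (0 : ℚ) < ℓ := by exact_mod_cast hℓpos
    nlinarith [sq_nonneg ((p' - p) / (q - q'))]
  subst hq
  exact ⟨(algebraMap ℚ L).injective (add_right_cancel h), rfl⟩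

theorem coord_ex (ℓ : ℕ) (hℓpos : 0 < ℓ) {L : Type} [Field L] [NumberField L]
    (α : L) (hα : α ^ 2 = -(ℓ : L)) (hdim : Module.finrank ℚ L = 2) (z : L) :
    ∃ p q : ℚ, z = algebraMap ℚ L p + algebraMap ℚ L q * α := by
  have hli : LinearIndependent ℚ ![(1 : L), α] := by
    rw [LinearIndependent.pair_iff]
    intro s t h
    apply coord_uniq ℓ hℓpos α hα s t 0 0
    rw [Algebra.smul_def, Algebra.smul_def, mul_one] at h
    rw [h]; simp
  let B := basisOfLinearIndependentOfCardEqFinrank hli (by simp [hdim])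
  have h := B.sum_repr z
  rw [Fin.sum_univ_two] at h
  refine ⟨B.repr z 0, B.repr z 1, ?_⟩
  conv_lhs => rw [← h]
  simp [B, Algebra.smul_def]

theorem trace_coord {L : Type} [Field L] [NumberField L]
    (α : L) (hdim : Module.finrank ℚ L = 2)
    (conj : L ≃ₐ[ℚ] L) (hconjα : conj α = -α) (p q : ℚ) :
    Algebra.trace ℚ L (algebraMap ℚ L p + algebraMap ℚ L q * α) = 2 * p := by
  have h0 : Algebra.trace ℚ L α = 0 := by
    have := Algebra.trace_eq_of_algEquiv conj α
    rw [hconjα, map_neg] at this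
    linarith
  rw [map_add, Algebra.trace_algebraMap, hdim, ← Algebra.smul_def, map_smul, h0]
  simp

theorem rat_int_of {L : Type} [Field L] [NumberField L] (r : ℚ)
    (h : IsIntegral ℤ (algebraMap ℚ L r)) : ∃ n : ℤ, r = n := by
  have h1 : IsIntegral ℤ r := (isIntegral_algebraMap_iff (algebraMap ℚ L).injective).1 h
  obtain ⟨n, hn⟩ := IsIntegrallyClosed.isIntegral_iff.1 h1
  exact ⟨n, by rw [← hn]; simp⟩

theorem sqf_int (m : ℕ) (hm : Squarefree m) (r : ℚ) (K : ℤ) (h : (m : ℚ) * r ^ 2 = K) :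
    ∃ n : ℤ, r = n := by
  have hd : (r.den : ℚ) ≠ 0 := by exact_mod_cast r.den_nz
  have h1 : (m : ℚ) * r.num ^ 2 = K * r.den ^ 2 := by
    rw [← h]
    nth_rw 2 [← Rat.num_div_den r]
    field_simp
  have h2 : (m : ℤ) * r.num ^ 2 = K * r.den ^ 2 := by exact_mod_cast h1
  have h3 : r.den ^ 2 ∣ m * r.num.natAbs ^ 2 := by
    have : (r.den : ℤ) ^ 2 ∣ m * r.num ^ 2 := ⟨K, by rw [h2]; ring⟩
    have := Int.natAbs_dvd_natAbs.2 this
    simpa [Int.natAbs_mul, Int.natAbs_pow] using this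
  have h4 : r.den ^ 2 ∣ m :=
    (Nat.Coprime.pow 2 2 r.reduced.symm).dvd_of_dvd_mul_right h3
  have h5 : r.den = 1 := by
    rw [pow_two] at h4
    exact Nat.isUnit_iff.1 (hm _ h4)
  exact ⟨r.num, by conv_lhs => rw [← Rat.num_div_den r, h5]
                   simp⟩

theorem int_rep (ℓ : ℕ)
    {L : Type} [Field L] [NumberField L]
    (α : L) (hα : α ^ 2 = -(ℓ : L))
    (conj : L ≃ₐ[ℚ] L) (hconjα : conj α = -α) (ε : ℤ)
    (hfund : (ℓ % 4 = 3 ∧ Squarefree ℓ ∧ ε = 1) ∨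
      ∃ m : ℕ, ℓ = 4 * m ∧ Squarefree m ∧ (m % 4 = 1 ∨ m % 4 = 2) ∧ ε = 0) (p q : ℚ)
    (hz : IsIntegral ℤ (algebraMap ℚ L p + algebraMap ℚ L q * α)) :
    ∃ a b : ℤ, p - q * ε = a ∧ 2 * q = b := by
  have hz' : IsIntegral ℤ (algebraMap ℚ L p - algebraMap ℚ L q * α) := by
    have := hz.map ((conj : L →ₐ[ℚ] L).restrictScalars ℤ)
    convert this using 1
    simp [hconjα]
    ring
  obtain ⟨A, hA⟩ := rat_int_of (L := L) (2 * p) (by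
    have e : algebraMap ℚ L (2 * p) = (algebraMap ℚ L p + algebraMap ℚ L q * α)
        + (algebraMap ℚ L p - algebraMap ℚ L q * α) := by
      rw [map_mul, map_ofNat]; ring
    rw [e]; exact hz.add hz')
  obtain ⟨N, hN⟩ := rat_int_of (L := L) (p ^ 2 + ℓ * q ^ 2) (by
    have e : algebraMap ℚ L (p ^ 2 + ℓ * q ^ 2) = (algebraMap ℚ L p + algebraMap ℚ L q * α)
        * (algebraMap ℚ L p - algebraMap ℚ L q * α) := by
      rw [map_add, map_mul, map_pow, map_pow, map_natCast]
      linear_combination ((algebraMap ℚ L) q)^2 * hα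
    rw [e]; exact hz.mul hz')
  have hp : p = A / 2 := by rw [← hA]; ring
  have par : ∀ x : ℤ, (x % 2 = 0 ∧ (x * x) % 4 = 0) ∨ (x % 2 = 1 ∧ (x * x) % 4 = 1) := by
    intro x
    have h4 : x % 4 = 0 ∨ x % 4 = 1 ∨ x % 4 = 2 ∨ x % 4 = 3 := by omega
    rcases h4 with h | h | h | h
    · left; exact ⟨by omega, by simp [Int.mul_emod, h]⟩
    · right; exact ⟨by omega, by simp [Int.mul_emod, h]⟩
    · left; exact ⟨by omega, by simp [Int.mul_emod, h]⟩
    · right; exact ⟨by omega, by simp [Int.mul_emod, h]⟩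
  rcases hfund with ⟨h3, hsq, rfl⟩ | ⟨m, rfl, hsq, hm, rfl⟩
  · obtain ⟨B, hB⟩ := sqf_int ℓ hsq (2 * q) (4 * N - A ^ 2) (by
      push_cast; rw [← hN, ← hA]; ring)
    have hq : q = B / 2 := by rw [← hB]; ring
    have e : A * A + ℓ * (B * B) = 4 * N := by
      have : (A : ℚ) * A + ℓ * (B * B) = 4 * N := by rw [← hN, ← hA, ← hB]; ring
      exact_mod_cast this
    obtain ⟨k, hk⟩ : ∃ k : ℤ, (ℓ : ℤ) = 4 * k + 3 := ⟨ℓ / 4, by omega⟩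
    rw [hk] at e
    have e' : A * A + 3 * (B * B) = 4 * (N - k * (B * B)) := by linarith
    have hpar : (A - B) % 2 = 0 := by
      rcases par A with ⟨h, h'⟩ | ⟨h, h'⟩ <;> rcases par B with ⟨g, g'⟩ | ⟨g, g'⟩ <;> omega
    obtain ⟨c, hc⟩ : ∃ c, A = B + 2 * c := ⟨(A - B) / 2, by omega⟩
    refine ⟨c, B, ?_, hB⟩
    rw [hp, hq, hc]; push_cast; ring
  · obtain ⟨B, hB⟩ := sqf_int m hsq (4 * q) (4 * N - A ^ 2) (by
      push_cast; rw [← hN, ← hA]; push_cast; ring)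
    have e : A * A + m * (B * B) = 4 * N := by
      have : (A : ℚ) * A + m * (B * B) = 4 * N := by
        rw [← hN, ← hA, ← hB]; push_cast; ring
      exact_mod_cast this
    have hpar : A % 2 = 0 ∧ B % 2 = 0 := by
      rcases hm with hm | hm
      · obtain ⟨k, hk⟩ : ∃ k : ℤ, (m : ℤ) = 4 * k + 1 := ⟨m / 4, by omega⟩
        rw [hk] at e
        have e' : A * A + (B * B) = 4 * (N - k * (B * B)) := by linarith
        rcases par A with ⟨h, h'⟩ | ⟨h, h'⟩ <;> rcases par B with ⟨g, g'⟩ | ⟨g, g'⟩ <;> omega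
      · obtain ⟨k, hk⟩ : ∃ k : ℤ, (m : ℤ) = 4 * k + 2 := ⟨m / 4, by omega⟩
        rw [hk] at e
        have e' : A * A + 2 * (B * B) = 4 * (N - k * (B * B)) := by linarith
        rcases par A with ⟨h, h'⟩ | ⟨h, h'⟩ <;> rcases par B with ⟨g, g'⟩ | ⟨g, g'⟩ <;> omega
    obtain ⟨c, hc⟩ : ∃ c, A = 2 * c := ⟨A / 2, by omega⟩
    obtain ⟨d, hd⟩ : ∃ d, B = 2 * d := ⟨B / 2, by omega⟩
    refine ⟨c, d, ?_, ?_⟩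
    · rw [hp, hc]; push_cast; ring
    · rw [hd] at hB; push_cast at hB; linarith

theorem assemble (ℓ : ℕ) (hℓpos : 0 < ℓ)
    (L : Type) [Field L] [NumberField L]
    (α : L) (hα : α ^ 2 = -(ℓ : L)) (hdim : Module.finrank ℚ L = 2)
    (conj : L ≃ₐ[ℚ] L) (hconjα : conj α = -α)
    (V : Type) [AddCommGroup V] [Module ℚ V] (h8 : Module.finrank ℚ V = 8)
    (T : V →ₗ[ℚ] V) (hT : ∀ x, T (T x) = -((ℓ : ℚ) • x))
    (b : V →ₗ[ℚ] V →ₗ[ℚ] ℚ) (bsymm : ∀ x y, b x y = b y x) (bpos : ∀ x, x ≠ 0 → 0 < b x x)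
    (bT : ∀ x y, b (T x) y = -b x (T y))
    (M : Submodule ℤ V)
    (hMO : ∀ p q : ℚ, IsIntegral ℤ (algebraMap ℚ L p + algebraMap ℚ L q * α) →
      ∀ x ∈ M, p • x + q • T x ∈ M)
    (hMfin : Module.finrank ℤ M = 8) (hFG : M.FG) (hspan : ∀ x : V, ∃ n : ℤ, n ≠ 0 ∧ n • x ∈ M)
    (heven : ∀ x ∈ M, ∃ n : ℤ, b x x = 2 * (n : ℚ))
    (hint : ∀ x ∈ M, ∀ y ∈ M, ∃ n : ℤ, b x y = n)
    (hdual : ∀ v, (∀ x ∈ M, ∃ n : ℤ, b v x = n) → v ∈ M)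
    (s : V →ₗ[ℚ] V) (hs5 : ∀ x, s (s (s (s (s x)))) = x) (hs1 : ∃ x ∈ M, s x ≠ x)
    (hsM : ∀ x ∈ M, s x ∈ M) (hsb : ∀ x y, b (s x) (s y) = b x y)
    (hsT : ∀ x, s (T x) = T (s x)) :
    ∃ (h : (Fin 4 → L) → (Fin 4 → L) → L)
      (Λ : Submodule (𝓞 L) (Fin 4 → L)) (σ : Λ ≃ₗ[𝓞 L] Λ),
      (∀ x y z, h (x + y) z = h x z + h y z) ∧
      (∀ (a : L) (x y), h (a • x) y = a * h x y) ∧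
      (∀ x y, h y x = conj (h x y)) ∧
      (∀ x, x ≠ 0 → ∃ r : ℚ, 0 < r ∧ h x x = algebraMap ℚ L r) ∧
      Λ.FG ∧ Submodule.span L (Λ : Set (Fin 4 → L)) = ⊤ ∧
      orderOf σ = 5 ∧
      (∀ x y : Λ, h (σ x) (σ y) = h x y) ∧
      (∀ x ∈ Λ, ∃ n : ℤ, Algebra.trace ℚ L (h x x) = 2 * (n : ℚ)) ∧
      (∀ x ∈ Λ, x ≠ 0 → 0 < Algebra.trace ℚ L (h x x)) ∧
      ({v | ∀ x ∈ Λ, ∃ n : ℤ, Algebra.trace ℚ L (h v x) = (n : ℚ)} =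
        {v : Fin 4 → L | v ∈ Λ}) ∧
      Module.finrank ℤ Λ = 8 := by
  have hℓ0 : (ℓ : ℚ) ≠ 0 := by exact_mod_cast hℓpos.ne'
  choose p q hpq using coord_ex ℓ hℓpos α hα hdim
  have huniq := coord_uniq ℓ hℓpos α hα
  have huniq' : ∀ (z : L) (a c : ℚ), z = algebraMap ℚ L a + algebraMap ℚ L c * α →
      p z = a ∧ q z = c := by
    intro z a c hz
    exact huniq _ _ _ _ ((hpq z).symm.trans hz)
  have hadd : ∀ z w, p (z + w) = p z + p w ∧ q (z + w) = q z + q w := by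
    intro z w
    apply huniq'
    rw [map_add, map_add]
    linear_combination hpq z + hpq w
  have hmul : ∀ z w, p (z * w) = p z * p w - ℓ * (q z * q w) ∧
      q (z * w) = p z * q w + q z * p w := by
    intro z w
    apply huniq'
    conv_lhs => rw [hpq z, hpq w]
    simp only [map_add, map_sub, map_mul, map_natCast]
    linear_combination (algebraMap ℚ L (q z) * algebraMap ℚ L (q w)) * hα
  have hrat : ∀ r : ℚ, p (algebraMap ℚ L r) = r ∧ q (algebraMap ℚ L r) = 0 := by
    intro r
    apply huniq'; simp
  have hpα : p α = 0 ∧ q α = 1 := by apply huniq'; simp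
  let mod : Module L V :=
    { smul := fun z x => p z • x + q z • T x
      one_smul := fun x => by
        have h1 := hrat 1
        rw [map_one] at h1
        show p 1 • x + q 1 • T x = x
        rw [h1.1, h1.2]; simp
      mul_smul := fun z w x => by
        show p (z * w) • x + q (z * w) • T x =
          p z • (p w • x + q w • T x) + q z • T (p w • x + q w • T x)
        rw [(hmul z w).1, (hmul z w).2, map_add, map_smul, map_smul, hT]
        module
      smul_zero := fun z => by
        show p z • (0 : V) + q z • T 0 = 0
        simp
      smul_add := fun z x y => by
        show p z • (x + y) + q z • T (x + y) = p z • x + q z • T x + (p z • y + q z • T y)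
        rw [map_add]; module
      add_smul := fun z w x => by
        show p (z + w) • x + q (z + w) • T x = p z • x + q z • T x + (p w • x + q w • T x)
        rw [(hadd z w).1, (hadd z w).2]; module
      zero_smul := fun x => by
        have h1 := hrat 0
        rw [map_zero] at h1
        show p 0 • x + q 0 • T x = 0
        rw [h1.1, h1.2]; simp }
  have smul_def : ∀ (z : L) (x : V), z • x = p z • x + q z • T x := fun _ _ => rfl
  have tower : IsScalarTower ℚ L V := by
    refine ⟨fun r z x => ?_⟩
    rw [Algebra.smul_def, mul_smul, smul_def (algebraMap ℚ L r), (hrat r).1, (hrat r).2]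
    simp
  have hαx : ∀ x : V, α • x = T x := by
    intro x; rw [smul_def, hpα.1, hpα.2]; simp
  have : FiniteDimensional ℚ V := Module.finite_of_finrank_pos (by omega)
  have : FiniteDimensional L V := Module.Finite.of_restrictScalars_finite ℚ L V
  have h4 : Module.finrank L V = 4 := by
    have := Module.finrank_mul_finrank ℚ L V
    rw [hdim, h8] at this
    omega
  let e : (Fin 4 → L) ≃ₗ[L] V := LinearEquiv.ofFinrankEq _ _ (by simp [h4])
  let hV : V → V → L := fun x y =>
    algebraMap ℚ L (b x y / 2) + algebraMap ℚ L (- b (T x) y / (2 * ℓ)) * α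
  have tr : ∀ x y, Algebra.trace ℚ L (hV x y) = b x y := by
    intro x y
    rw [trace_coord α hdim conj hconjα]; ring
  let Λ : Submodule (𝓞 L) (Fin 4 → L) :=
    { carrier := {x | e x ∈ M}
      add_mem' := fun {x y} hx hy => by
        show e (x + y) ∈ M
        rw [map_add]; exact M.add_mem hx hy
      zero_mem' := by
        show e 0 ∈ M
        rw [map_zero]; exact M.zero_mem
      smul_mem' := fun c x hx => by
        show e ((c : L) • x) ∈ M
        rw [map_smul, smul_def]
        apply hMO _ _ _ _ hx
        rw [← hpq]
        exact c.2 }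
  have memΛ : ∀ x, x ∈ Λ ↔ e x ∈ M := fun _ => Iff.rfl
  let sL : (Fin 4 → L) →ₗ[L] (Fin 4 → L) :=
    { toFun := fun x => e.symm (s (e x))
      map_add' := fun x y => by simp
      map_smul' := fun c x => by
        simp only [map_smul, RingHom.id_apply]
        rw [← map_smul e.symm]
        congr 1
        rw [smul_def, map_add, map_smul, map_smul, hsT, smul_def] }
  have esL : ∀ x, e (sL x) = s (e x) := fun x => by simp [sL]
  have sL5 : ∀ x, sL (sL (sL (sL (sL x)))) = x := by
    intro x
    apply e.injective
    simp only [esL, hs5]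
  let sΛ : Λ →ₗ[𝓞 L] Λ := (sL.restrictScalars (𝓞 L)).restrict (p := Λ) (q := Λ) (fun x hx => by
    rw [memΛ] at hx ⊢
    show e (sL x) ∈ M
    rw [esL]; exact hsM _ hx)
  have sΛc : ∀ x : Λ, ((sΛ x : Λ) : Fin 4 → L) = sL x := fun _ => rfl
  let σ : Λ ≃ₗ[𝓞 L] Λ := LinearEquiv.ofLinearMap sΛ (sΛ ∘ₗ sΛ ∘ₗ sΛ ∘ₗ sΛ)
    (by ext1 x; apply Subtype.ext; simp only [LinearMap.comp_apply, sΛc, sL5]; rfl)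
    (by ext1 x; apply Subtype.ext; simp only [LinearMap.comp_apply, sΛc, sL5]; rfl)
  have σc : ∀ x : Λ, ((σ x : Λ) : Fin 4 → L) = sL x := fun _ => rfl
  let eZ : Λ ≃ₗ[ℤ] M :=
    { toFun := fun x => ⟨e x, x.2⟩
      invFun := fun y => ⟨e.symm y, by rw [memΛ]; simp⟩
      map_add' := fun x y => by apply Subtype.ext; simp
      map_smul' := fun c x => Subtype.ext (map_zsmul e c (x : Fin 4 → L))
      left_inv := fun x => by simp
      right_inv := fun y => by simp }
  refine ⟨fun x y => hV (e x) (e y), Λ, σ, ?_, ?_, ?_, ?_, ?_, ?_, ?_, ?_, ?_, ?_, ?_, ?_⟩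
  · intro x y z
    simp only [hV, map_add, LinearMap.add_apply]
    rw [← sub_eq_zero]
    simp only [add_div, neg_add, map_add]
    ring
  · intro a x y
    simp only [hV, map_smul]
    obtain ⟨a1, ha1⟩ : ∃ a1, a1 = p a := ⟨_, rfl⟩
    obtain ⟨a2, ha2⟩ : ∃ a1, a1 = q a := ⟨_, rfl⟩
    have ha := hpq a
    rw [smul_def, ← ha1, ← ha2]
    rw [← ha1, ← ha2] at ha
    simp only [map_add, map_smul, hT, LinearMap.add_apply, LinearMap.smul_apply, map_neg,
      LinearMap.neg_apply, smul_eq_mul]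
    rw [ha]
    have hℓL : (ℓ : L) ≠ 0 := by exact_mod_cast hℓpos.ne'
    simp only [map_add, map_div₀, map_mul, map_neg, map_natCast, map_ofNat]
    field_simp
    have : (ℓ : L) = - α ^ 2 := by rw [hα]; ring
    rw [this]
    ring
  · intro x y
    simp only [hV]
    rw [map_add, map_mul, AlgEquiv.commutes, AlgEquiv.commutes, hconjα, bsymm (e y) (e x),
      bT, bsymm (e y)]
    simp only [neg_neg, neg_div, map_neg]
    ring
  · intro x hx
    refine ⟨b (e x) (e x) / 2, ?_, ?_⟩
    · have := bpos (e x) (by simpa using hx)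
      linarith
    · have h0 : b (T (e x)) (e x) = 0 := by
        have := bT (e x) (e x)
        rw [bsymm (e x)] at this
        linarith
      simp [hV, h0]
  · have : Module.Finite ℤ M := Module.Finite.iff_fg.2 hFG
    have : Module.Finite ℤ Λ := Module.Finite.equiv eZ.symm
    have : Module.Finite (𝓞 L) Λ := Module.Finite.of_restrictScalars_finite ℤ (𝓞 L) Λ
    exact Module.Finite.iff_fg.1 this
  · rw [eq_top_iff]
    intro x _
    obtain ⟨n, hn, hx⟩ := hspan (e x)
    have h1 : n • x ∈ Λ := by rw [memΛ, map_zsmul]; exact hx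
    have hn' : (n : L) ≠ 0 := by exact_mod_cast hn
    have h2 : x = (n : L)⁻¹ • (n • x) := by
      rw [← Int.cast_smul_eq_zsmul L, smul_smul, inv_mul_cancel₀ hn', one_smul]
    rw [h2]
    exact Submodule.smul_mem _ _ (Submodule.subset_span h1)
  · have : Fact (Nat.Prime 5) := ⟨Nat.prime_five⟩
    apply orderOf_eq_prime
    · apply LinearEquiv.ext
      intro x
      apply Subtype.ext
      show sL (sL (sL (sL (sL x)))) = x
      exact sL5 _
    · intro h
      obtain ⟨x, hx, hne⟩ := hs1
      apply hne
      have := congrArg (fun τ : Λ ≃ₗ[𝓞 L] Λ => e (τ ⟨e.symm x, by rw [memΛ]; simpa using hx⟩)) h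
      simp only [σc, esL] at this
      simpa using this
  · intro x y
    simp only [hV, σc, esL, hsb, ← hsT]
  · intro x hx
    obtain ⟨n, hn⟩ := heven _ hx
    exact ⟨n, by rw [tr, hn]⟩
  · intro x hx hx0
    rw [tr]
    exact bpos _ (by simpa using hx0)
  · ext v
    simp only [Set.mem_ofPred_eq]
    constructor
    · intro hv
      rw [memΛ]
      apply hdual
      intro x hx
      obtain ⟨n, hn⟩ := hv (e.symm x) (by rw [memΛ]; simpa using hx)
      refine ⟨n, ?_⟩
      rw [← hn, tr]; simp
    · intro hv x hx
      obtain ⟨n, hn⟩ := hint _ hv _ hx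
      exact ⟨n, by rw [tr, hn]⟩
  · rw [LinearEquiv.finrank_eq eZ, hMfin]

def bfun (x y : QB) : ℚ := 2 * (x.re.re * y.re.re + x.re.im * y.re.im
  + (x.imI.re * y.imI.re + x.imI.im * y.imI.im) + (x.imJ.re * y.imJ.re + x.imJ.im * y.imJ.im)
  + (x.imK.re * y.imK.re + x.imK.im * y.imK.im))

def bform : QB →ₗ[ℚ] QB →ₗ[ℚ] ℚ := LinearMap.mk₂ ℚ bfun
  (by intro x y z; simp [bfun]; ring)
  (by intro c x y; simp [bfun]; ring)
  (by intro x y z; simp [bfun]; ring)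
  (by intro c x y; simp [bfun]; ring)

theorem bform_apply (x y : QB) : bform x y = bfun x y := rfl

theorem bform_self (x : QB) : bform x x = 2 * (Quaternion.normSq x).re := by
  rw [normSq_re', bform_apply, bfun]; ring

theorem bform_symm (x y : QB) : bform x y = bform y x := by
  rw [bform_apply, bform_apply, bfun, bfun]; ring

theorem bform_polar (x y : QB) : bform x y = (Quaternion.normSq (x + y)).re
    - (Quaternion.normSq x).re - (Quaternion.normSq y).re := by
  rw [normSq_re', normSq_re', normSq_re', bform_apply, bfun]
  simp
  ring

theorem bform_int {x y : QB} (hx : x ∈ Ico) (hy : y ∈ Ico) : ∃ n : ℤ, bform x y = n := by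
  obtain ⟨a, _, ha⟩ := normSq_mem (Ico.add_mem hx hy)
  obtain ⟨b, _, hb⟩ := normSq_mem hx
  obtain ⟨c, _, hc⟩ := normSq_mem hy
  refine ⟨a - b - c, ?_⟩
  rw [bform_polar, ha, hb, hc]; push_cast; rfl

theorem bform_even {x : QB} (hx : x ∈ Ico) : ∃ n : ℤ, bform x x = 2 * (n : ℚ) := by
  obtain ⟨b, _, hb⟩ := normSq_mem hx
  exact ⟨b, by rw [bform_self, hb]⟩

theorem bform_pos (x : QB) (hx : x ≠ 0) : 0 < bform x x := by
  rw [bform_self]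
  have : (Quaternion.normSq x).re ≠ 0 := fun h => hx (QB_ext_zero x h)
  have := lt_of_le_of_ne (normSq_re_nonneg x) this.symm
  linarith

theorem bform_right (u : QB) (ℓ : ℕ) (hu : Quaternion.normSq u = (ℓ : QF)) (x y : QB) :
    bform (x * u) (y * u) = ℓ * bform x y := by
  rw [bform_polar, bform_polar, ← add_mul, map_mul, map_mul, map_mul, hu]
  simp
  ring

theorem bform_left (u : QB) (hu : Quaternion.normSq u = 1) (x y : QB) :
    bform (u * x) (u * y) = bform x y := by
  rw [bform_polar, bform_polar, ← mul_add, map_mul, map_mul, map_mul, hu, one_mul, one_mul, one_mul]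

theorem finrank_QB : Module.finrank ℚ QB = 8 := by
  have h1 : Module.finrank ℚ QF = 2 := QuadraticAlgebra.finrank_eq_two _ _
  have h2 : Module.finrank QF QB = 4 := Quaternion.finrank_eq_four
  have := Module.finrank_mul_finrank ℚ QF QB
  rw [h1, h2] at this
  omega

def MI : Submodule ℤ QB := AddSubgroup.toIntSubmodule Ico.toAddSubgroup

theorem mem_MI (x : QB) : x ∈ MI ↔ x ∈ Ico := Iff.rfl

def phiI : (Fin 8 → ℤ) →ₗ[ℤ] QB := AddMonoidHom.toIntLinearMap
  { toFun := fun a => mkI ⟨a 0, a 1⟩ ⟨a 2, a 3⟩ ⟨a 4, a 5⟩ ⟨a 6, a 7⟩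
    map_zero' := by rw [zero_mkI]; congr 1
    map_add' := fun a b => by rw [mkI_add]; congr 1 <;> ext <;> simp }

theorem phiI_apply (a : Fin 8 → ℤ) :
  phiI a = mkI ⟨a 0, a 1⟩ ⟨a 2, a 3⟩ ⟨a 4, a 5⟩ ⟨a 6, a 7⟩ := rfl

theorem phiI_inj : Function.Injective phiI := by
  rw [injective_iff_map_eq_zero]
  intro a ha
  rw [phiI_apply] at ha
  have h0 : _ = (0 : QF) := congrArg (fun x : QB => x.re) ha
  have h1 : _ = (0 : QF) := congrArg (fun x : QB => x.imI) ha
  have h2 : _ = (0 : QF) := congrArg (fun x : QB => x.imJ) ha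
  have h3 : _ = (0 : QF) := congrArg (fun x : QB => x.imK) ha
  have g0 := congrArg QuadraticAlgebra.re h0
  have g1 := congrArg QuadraticAlgebra.im h0
  have g2 := congrArg QuadraticAlgebra.re h1
  have g3 := congrArg QuadraticAlgebra.im h1
  have g4 := congrArg QuadraticAlgebra.re h2
  have g5 := congrArg QuadraticAlgebra.im h2
  have g6 := congrArg QuadraticAlgebra.re h3
  have g7 := congrArg QuadraticAlgebra.im h3
  clear h0 h1 h2 h3 ha
  simp at g0 g1 g2 g3 g4 g5 g6 g7
  simp [g0, g1] at g2 g3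
  simp [g0, g1, g2, g3] at g4 g5 g6 g7
  funext i
  fin_cases i <;> assumption

theorem phiI_range : LinearMap.range phiI = MI := by
  ext x
  rw [mem_MI, LinearMap.mem_range]
  constructor
  · rintro ⟨a, rfl⟩
    exact ⟨_, ⟨_, _, rfl⟩, _, ⟨_, _, rfl⟩, _, ⟨_, _, rfl⟩, _, ⟨_, _, rfl⟩, phiI_apply a⟩
  · rintro ⟨_, ⟨a0, a1, rfl⟩, _, ⟨a2, a3, rfl⟩, _, ⟨a4, a5, rfl⟩, _, ⟨a6, a7, rfl⟩, rfl⟩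
    exact ⟨![a0, a1, a2, a3, a4, a5, a6, a7], rfl⟩

theorem MI_finrank : Module.finrank ℤ MI = 8 := by
  rw [← phiI_range, LinearMap.finrank_range_of_inj phiI_inj]; simp

theorem MI_fg : MI.FG := by
  rw [← phiI_range, LinearMap.range_eq_map]
  exact Submodule.FG.map _ Module.Finite.fg_top

theorem mkB_eta (x : QB) : x = mkB x.re x.imI x.imJ x.imK := rfl

theorem mem_Ico' (x : QB) (u0 v0 u1 v1 u2 v2 u3 v3 : ℤ)
    (a0 : x.re.re = u0 / 2) (b0 : x.re.im = v0 / 2) (a1 : x.imI.re = u1 / 2)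
    (b1 : x.imI.im = v1 / 2) (a2 : x.imJ.re = u2 / 2) (b2 : x.imJ.im = v2 / 2)
    (a3 : x.imK.re = u3 / 2) (b3 : x.imK.im = v3 / 2)
    (h1 : (u0 + u1 + u2 + u3) % 2 = 0) (h2 : (v0 + v1 + v2 + v3) % 2 = 0)
    (h3 : (u1 + u2 + v2 + v3) % 2 = 0) (h4 : (v1 + u2 + u3 + v3) % 2 = 0) : x ∈ Ico := by
  have h := mem_Ico_of ![u0, u1, u2, u3] ![v0, v1, v2, v3] h1 h2 h3 h4
  have e : x = mkB ⟨u0 / 2, v0 / 2⟩ ⟨u1 / 2, v1 / 2⟩ ⟨u2 / 2, v2 / 2⟩ ⟨u3 / 2, v3 / 2⟩ := by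
    apply QuaternionAlgebra.ext <;> apply QuadraticAlgebra.ext <;> assumption
  rw [e]; exact h

theorem MI_span (x : QB) : ∃ n : ℤ, n ≠ 0 ∧ n • x ∈ MI := by
  have key : ∀ r : ℚ, ∀ d : ℕ, (r.den ∣ d) → ∃ k : ℤ, (d : ℚ) * r = k := by
    rintro r d ⟨c, rfl⟩
    refine ⟨c * r.num, ?_⟩
    push_cast
    rw [mul_comm (r.den : ℚ), mul_assoc, Rat.den_mul_eq_num]
  obtain ⟨d, hd⟩ : ∃ d : ℕ, d = x.re.re.den * x.re.im.den * x.imI.re.den * x.imI.im.den *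
    x.imJ.re.den * x.imJ.im.den * x.imK.re.den * x.imK.im.den := ⟨_, rfl⟩
  have hd0 : d ≠ 0 := by rw [hd]; simp
  have D : ∀ r ∈ [x.re.re, x.re.im, x.imI.re, x.imI.im, x.imJ.re, x.imJ.im, x.imK.re, x.imK.im],
      r.den ∣ d := by
    intro r hr
    simp only [List.mem_cons, List.not_mem_nil, or_false] at hr
    rw [hd]
    rcases hr with rfl | rfl | rfl | rfl | rfl | rfl | rfl | rfl <;>
    repeat' first | exact dvd_mul_left _ _ | exact dvd_refl _ | apply Dvd.dvd.mul_right
  obtain ⟨k0, h0⟩ := key x.re.re d (D _ (by simp))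
  obtain ⟨k1, h1⟩ := key x.re.im d (D _ (by simp))
  obtain ⟨k2, h2⟩ := key x.imI.re d (D _ (by simp))
  obtain ⟨k3, h3⟩ := key x.imI.im d (D _ (by simp))
  obtain ⟨k4, h4⟩ := key x.imJ.re d (D _ (by simp))
  obtain ⟨k5, h5⟩ := key x.imJ.im d (D _ (by simp))
  obtain ⟨k6, h6⟩ := key x.imK.re d (D _ (by simp))
  obtain ⟨k7, h7⟩ := key x.imK.im d (D _ (by simp))
  refine ⟨2 * d, by simpa using hd0, ?_⟩
  rw [mem_MI, ← Int.cast_smul_eq_zsmul ℚ]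
  apply mem_Ico' _ (4 * k0) (4 * k1) (4 * k2) (4 * k3) (4 * k4) (4 * k5) (4 * k6) (4 * k7)
  · simp; linarith
  · simp; linarith
  · simp; linarith
  · simp; linarith
  · simp; linarith
  · simp; linarith
  · simp; linarith
  · simp; linarith
  · omega
  · omega
  · omega
  · omega

theorem MI_dual (v : QB) (hv : ∀ x ∈ MI, ∃ n : ℤ, bform v x = n) : v ∈ MI := by
  have test : ∀ (u0 v0 u1 v1 u2 v2 u3 v3 : ℤ)
    (_ : (u0 + u1 + u2 + u3) % 2 = 0) (_ : (v0 + v1 + v2 + v3) % 2 = 0)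
    (_ : (u1 + u2 + v2 + v3) % 2 = 0) (_ : (v1 + u2 + u3 + v3) % 2 = 0),
    ∃ n : ℤ, v.re.re * u0 + v.re.im * v0 + v.imI.re * u1 + v.imI.im * v1
      + v.imJ.re * u2 + v.imJ.im * v2 + v.imK.re * u3 + v.imK.im * v3 = n := by
    intro u0 v0 u1 v1 u2 v2 u3 v3 h1 h2 h3 h4
    obtain ⟨n, hn⟩ := hv (mkB ⟨u0 / 2, v0 / 2⟩ ⟨u1 / 2, v1 / 2⟩ ⟨u2 / 2, v2 / 2⟩ ⟨u3 / 2, v3 / 2⟩)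
      (mem_Ico' _ u0 v0 u1 v1 u2 v2 u3 v3 rfl rfl rfl rfl rfl rfl rfl rfl h1 h2 h3 h4)
    refine ⟨n, ?_⟩
    rw [← hn, bform_apply, bfun]
    simp only [mkB_re, mkB_imI, mkB_imJ, mkB_imK]
    ring
  obtain ⟨u0, hu0⟩ := test 2 0 0 0 0 0 0 0 rfl rfl rfl rfl
  obtain ⟨v0, hv0⟩ := test 0 2 0 0 0 0 0 0 rfl rfl rfl rfl
  obtain ⟨u1, hu1⟩ := test 0 0 2 0 0 0 0 0 rfl rfl rfl rfl
  obtain ⟨v1, hv1⟩ := test 0 0 0 2 0 0 0 0 rfl rfl rfl rfl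
  obtain ⟨u2, hu2⟩ := test 0 0 0 0 2 0 0 0 rfl rfl rfl rfl
  obtain ⟨v2, hv2⟩ := test 0 0 0 0 0 2 0 0 rfl rfl rfl rfl
  obtain ⟨u3, hu3⟩ := test 0 0 0 0 0 0 2 0 rfl rfl rfl rfl
  obtain ⟨v3, hv3⟩ := test 0 0 0 0 0 0 0 2 rfl rfl rfl rfl
  obtain ⟨c0, hc0⟩ := test 1 0 1 0 1 0 1 0 rfl rfl rfl rfl
  obtain ⟨c1, hc1⟩ := test 0 1 0 1 0 1 0 1 rfl rfl rfl rfl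
  obtain ⟨c2, hc2⟩ := test 0 0 1 0 (-1) 1 0 1 rfl rfl rfl rfl
  obtain ⟨c3, hc3⟩ := test 0 0 0 1 1 0 1 1 rfl rfl rfl rfl
  push_cast at hu0 hv0 hu1 hv1 hu2 hv2 hu3 hv3 hc0 hc1 hc2 hc3
  have e0 : u0 + u1 + u2 + u3 = 2 * c0 := by
    have : (u0 : ℚ) + u1 + u2 + u3 = 2 * c0 := by linarith
    exact_mod_cast this
  have e1 : v0 + v1 + v2 + v3 = 2 * c1 := by
    have : (v0 : ℚ) + v1 + v2 + v3 = 2 * c1 := by linarith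
    exact_mod_cast this
  have e2 : u1 - u2 + v2 + v3 = 2 * c2 := by
    have : (u1 : ℚ) - u2 + v2 + v3 = 2 * c2 := by linarith
    exact_mod_cast this
  have e3 : v1 + u2 + u3 + v3 = 2 * c3 := by
    have : (v1 : ℚ) + u2 + u3 + v3 = 2 * c3 := by linarith
    exact_mod_cast this
  rw [mem_MI]
  apply mem_Ico' v u0 v0 u1 v1 u2 v2 u3 v3 <;> first | linarith | omega

def ζ5 : QB := mkB ⟨-1/2, 1/2⟩ ⟨0, 0⟩ ⟨1/2, 0⟩ ⟨0, 1/2⟩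

theorem ζ5_mem : ζ5 ∈ Ico := by
  apply mem_Ico' ζ5 (-1) 1 0 0 1 0 0 1 <;> first | rfl | (simp [ζ5])

theorem ζ5_norm : Quaternion.normSq ζ5 = 1 := by
  apply QuadraticAlgebra.ext
  · rw [normSq_re']; simp [ζ5]; norm_num
  · rw [normSq_im']; simp [ζ5]; norm_num

theorem ζ5_two : ζ5 * ζ5 = mkB ⟨0, -1/2⟩ ⟨0, 0⟩ ⟨-1/2, 1/2⟩ ⟨1/2, 0⟩ := by
  ext <;> simp [ζ5] <;> norm_num

theorem ζ5_four : (ζ5 * ζ5) * (ζ5 * ζ5) = star ζ5 := by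
  rw [ζ5_two]
  ext <;> simp [ζ5] <;> norm_num

theorem ζ5_pow (x : QB) : ζ5 * (ζ5 * (ζ5 * (ζ5 * (ζ5 * x)))) = x := by
  have h : ((ζ5 * ζ5) * (ζ5 * ζ5)) * ζ5 = 1 := by
    rw [ζ5_four, Quaternion.star_mul_self, ζ5_norm, Quaternion.coe_one]
  calc _ = (((ζ5 * ζ5) * (ζ5 * ζ5)) * ζ5) * x := by simp only [mul_assoc]
    _ = x := by rw [h, one_mul]

theorem ζ5_ne : ζ5 ≠ 1 := by
  intro h
  have h1 : ζ5.imJ = (0 : QF) := congrArg (fun x : QB => x.imJ) h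
  have := congrArg QuadraticAlgebra.re h1
  simp [ζ5] at this

theorem exists_P (X Y Z : ℤ) : ∃ P ∈ Ico, star P = -P ∧
    Quaternion.normSq P = ((X ^ 2 + 2 * Y ^ 2 + 10 * Z ^ 2 : ℤ) : QF) := by
  refine ⟨mkB ⟨0, 0⟩ ⟨X, 0⟩ ⟨Y - Z, 2 * Z⟩ ⟨Y + Z, -2 * Z⟩, ?_, ?_, ?_⟩
  · apply mem_Ico' _ 0 0 (2 * X) 0 (2 * (Y - Z)) (4 * Z) (2 * (Y + Z)) (-4 * Z)
    · simp
    · simp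
    · simp
    · simp
    · simp
    · simp; ring
    · simp
    · simp; ring
    all_goals omega
  · ext <;> simp
  · apply QuadraticAlgebra.ext
    · rw [normSq_re']; simp [pow_two]; ring
    · rw [normSq_im']; simp [pow_two]; ring

theorem ring_u {R : Type} [Ring R] [StarRing R] (g : R) (ε n ℓ : ℤ) (h1 : g + star g = (ε : R))
    (h2 : g * star g = (n : R)) (hl : 4 * n - ε ^ 2 = ℓ) :
    star (2 * g - (ε : R)) = -(2 * g - (ε : R)) ∧
    (2 * g - (ε : R)) * (2 * g - (ε : R)) = -((ℓ : ℤ) : R) := by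
  have e : star g = ε - g := by rw [← h1]; abel
  have c : g * (ε : R) = ε * g := (Int.cast_commute ε g).eq.symm
  have h3 : g * g = ε * g - n := by
    rw [e, mul_sub, c] at h2
    rw [← h2]; abel
  constructor
  · rw [star_sub, star_mul, e, star_intCast, star_ofNat]
    noncomm_ring
  · rw [← hl]
    push_cast
    have : (2 * g - (ε : R)) * (2 * g - (ε : R)) = 4 * (g * g) - 2 * (g * ε) - 2 * (ε * g)
      + ε ^ 2 := by noncomm_ring
    rw [this, h3, c]
    noncomm_ring

theorem star_add_aux {R : Type} [Ring R] [StarRing R] (P : R) (M : ℤ) (h : star P = -P) :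
    ((M : R) + P) + star ((M : R) + P) = ((1 * (2 * M) : ℤ) : R) ∧
    ((M : R) + P) * star ((M : R) + P) = (M : R) ^ 2 + P * star P := by
  have c : P * (M : R) = M * P := (Int.cast_commute M P).eq.symm
  rw [star_add, star_intCast, h]
  constructor
  · push_cast; noncomm_ring
  · rw [add_mul, mul_add, mul_add, c]; noncomm_ring

theorem exists_g (ℓ : ℕ) (hℓpos : 0 < ℓ) (hℓ5 : ¬ (5 ∣ ℓ))
    (hfund : (ℓ % 4 = 3 ∧ Squarefree ℓ) ∨
      ∃ m : ℕ, ℓ = 4 * m ∧ Squarefree m ∧ (m % 4 = 1 ∨ m % 4 = 2)) :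
    ∃ ε n : ℤ, ((ℓ % 4 = 3 ∧ Squarefree ℓ ∧ ε = 1) ∨
      ∃ m : ℕ, ℓ = 4 * m ∧ Squarefree m ∧ (m % 4 = 1 ∨ m % 4 = 2) ∧ ε = 0) ∧
      4 * n - ε ^ 2 = ℓ ∧
      ∃ g ∈ Ico, g + star g = ((ε : ℤ) : QB) ∧ Quaternion.normSq g = ((n : ℤ) : QF) := by
  rcases hfund with ⟨h3, hsq⟩ | ⟨m, rfl, hsq, hm⟩
  · obtain ⟨M, X, Y, Z, hM, he⟩ := rat_rep ℓ hℓpos hℓ5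
    obtain ⟨P, hP, hs, hn⟩ := exists_P X Y Z
    obtain ⟨n, hn4⟩ : ∃ n : ℤ, 4 * n = 1 + ℓ := ⟨(1 + ℓ) / 4, by omega⟩
    refine ⟨1, n, Or.inl ⟨h3, hsq, rfl⟩, by linarith, ?_⟩
    have aux := star_add_aux P M hs
    apply embed 1 n (2 * M) (by omega) (M + P) (Ico.add_mem (intCast_mem Ico M) hP)
    · exact aux.1
    · have h2 := aux.2
      rw [Quaternion.self_mul_star, Quaternion.self_mul_star, hn, ← he, Quaternion.coe_intCast] at h2
      have h4 : ((Quaternion.normSq ((M : QB) + P) : QF) : QB) = (((n * (2 * M) ^ 2 : ℤ) : QF) : QB) := by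
        rw [h2, Quaternion.coe_intCast]
        have : n * (2 * M) ^ 2 = M ^ 2 + ℓ * M ^ 2 := by linear_combination M ^ 2 * hn4
        rw [this]; push_cast; rfl
      exact Quaternion.coe_injective h4
  · obtain ⟨M, X, Y, Z, hM, he⟩ := rat_rep m (by omega) (fun h => hℓ5 (h.mul_left 4))
    obtain ⟨P, hP, hs, hn⟩ := exists_P X Y Z
    refine ⟨0, m, Or.inr ⟨m, rfl, hsq, hm, rfl⟩, by push_cast; ring, ?_⟩
    apply embed 0 m M hM P hP
    · rw [hs, zero_mul, Int.cast_zero]; exact add_neg_cancel P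
    · rw [hn, he]

theorem mulR_smul (u : QB) (c : ℚ) (x : QB) : (c • x) * u = c • (x * u) :=
  map_rat_smul (AddMonoidHom.mulRight u) c x

theorem mulL_smul (u : QB) (c : ℚ) (x : QB) : u * (c • x) = c • (u * x) :=
  map_rat_smul (AddMonoidHom.mulLeft u) c x

def TR (u : QB) : QB →ₗ[ℚ] QB :=
  { toFun := fun x => x * u
    map_add' := fun x y => add_mul x y u
    map_smul' := fun c x => mulR_smul u c x }

def TL (u : QB) : QB →ₗ[ℚ] QB :=
  { toFun := fun x => u * x
    map_add' := fun x y => mul_add u x y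
    map_smul' := fun c x => mulL_smul u c x }

theorem TR_apply (u x : QB) : TR u x = x * u := rfl
theorem TL_apply (u x : QB) : TL u x = u * x := rfl
theorem QB_mul_neg (x y : QB) : x * -y = -(x * y) := mul_neg x y
theorem QB_smul_int (c : ℤ) (x : QB) : x * (c : QB) = (c : ℚ) • x :=
  (Int.cast_commute c x).eq.symm.trans
    ((zsmul_eq_mul x c).symm.trans (Int.cast_smul_eq_zsmul ℚ c x).symm)
theorem QB_two_smul (x : QB) : (2 : ℚ) • x = x + x := two_smul ℚ x

/-- If `5 ∤ ℓ`, the root lattice `E₈` has a Hermitian structure over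
`O_L` admitting an automorphism of order `5`: there is an `O_L`-lattice `Λ_h` (inside
`V = L⁴`) with positive definite `L`-Hermitian form `h` and an `O_L`-linear isometry of
order `5`, such that the `ℤ`-bilinear form `Tr_{L/ℚ}(h(x,y))` makes `Λ_h` a positive
definite even unimodular `ℤ`-lattice of rank `8`. -/
theorem E8_hermitian_structure (ℓ : ℕ) (hℓpos : 0 < ℓ) (hℓ5 : ¬ (5 ∣ ℓ))
    (hfund : (ℓ % 4 = 3 ∧ Squarefree ℓ) ∨
      ∃ m : ℕ, ℓ = 4 * m ∧ Squarefree m ∧ (m % 4 = 1 ∨ m % 4 = 2))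
    (L : Type) [Field L] [NumberField L]
    (α : L) (hα : α ^ 2 = -(ℓ : L)) (hdim : Module.finrank ℚ L = 2)
    (conj : L ≃ₐ[ℚ] L) (hconjα : conj α = -α) :
    ∃ (h : (Fin 4 → L) → (Fin 4 → L) → L)
      (Λ : Submodule (𝓞 L) (Fin 4 → L)) (σ : Λ ≃ₗ[𝓞 L] Λ),
      (∀ x y z, h (x + y) z = h x z + h y z) ∧
      (∀ (a : L) (x y), h (a • x) y = a * h x y) ∧
      (∀ x y, h y x = conj (h x y)) ∧
      (∀ x, x ≠ 0 → ∃ r : ℚ, 0 < r ∧ h x x = algebraMap ℚ L r) ∧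
      Λ.FG ∧ Submodule.span L (Λ : Set (Fin 4 → L)) = ⊤ ∧
      orderOf σ = 5 ∧
      (∀ x y : Λ, h (σ x) (σ y) = h x y) ∧
      -- the trace form is even, positive definite, unimodular, of rank 8:
      (∀ x ∈ Λ, ∃ n : ℤ, Algebra.trace ℚ L (h x x) = 2 * (n : ℚ)) ∧
      (∀ x ∈ Λ, x ≠ 0 → 0 < Algebra.trace ℚ L (h x x)) ∧
      ({v | ∀ x ∈ Λ, ∃ n : ℤ, Algebra.trace ℚ L (h v x) = (n : ℚ)} =
        {v : Fin 4 → L | v ∈ Λ}) ∧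
      Module.finrank ℤ Λ = 8 := by
  obtain ⟨ε, n, hfund', hn, g, hg, htr, hnm⟩ := exists_g ℓ hℓpos hℓ5 hfund
  have hgg : g * star g = ((n : ℤ) : QB) := by
    rw [Quaternion.self_mul_star, hnm, Quaternion.coe_intCast]
  obtain ⟨hus, huu⟩ := ring_u g ε n ℓ htr hgg hn
  obtain ⟨u, hu⟩ : ∃ u : QB, u = 2 * g - (ε : QB) := ⟨_, rfl⟩
  rw [← hu] at hus huu
  have hℓ0 : (ℓ : ℚ) ≠ 0 := by exact_mod_cast hℓpos.ne'
  have hnu : Quaternion.normSq u = (ℓ : QF) := by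
    apply Quaternion.coe_injective
    rw [← Quaternion.self_mul_star, hus, QB_mul_neg, huu]
    rw [Int.cast_natCast, Quaternion.coe_natCast]
    exact neg_neg _
  have hTT : ∀ x, TR u (TR u x) = -((ℓ : ℚ) • x) := by
    intro x
    rw [TR_apply, TR_apply, mul_assoc, huu, QB_mul_neg, QB_smul_int, Int.cast_natCast]
  have hTb : ∀ x y, bform (TR u x) (TR u y) = ℓ * bform x y := fun x y => bform_right u ℓ hnu x y
  apply assemble ℓ hℓpos L α hα hdim conj hconjα QB finrank_QB (TR u) hTT bform bform_symm bform_pos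
    ?_ MI ?_ MI_finrank MI_fg MI_span (fun x hx => bform_even hx) (fun x hx y hy => bform_int hx hy)
    MI_dual (TL ζ5) ζ5_pow ⟨1, Ico.one_mem, by rw [TL_apply, mul_one]; exact ζ5_ne⟩
    (fun x hx => Ico.mul_mem ζ5_mem hx) (bform_left ζ5 ζ5_norm)
    (fun x => (mul_assoc ζ5 x u).symm)
  · intro x y
    have h := hTb x (TR u y)
    rw [hTT, map_neg, map_smul, smul_eq_mul] at h
    apply mul_left_cancel₀ hℓ0
    linarith
  · intro p q hz x hx
    obtain ⟨a, c, ha, hc⟩ := int_rep ℓ α hα conj hconjα ε hfund' p q hz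
    have key : p • x + q • TR u x = x * ((a : QB) + (c : QB) * g) := by
      have e1 : x * ((a : QB) + (c : QB) * g) = (a : ℚ) • x + (c : ℚ) • (x * g) := by
        rw [mul_add, ← mul_assoc, QB_smul_int, QB_smul_int, mulR_smul]
      have e2 : TR u x = (2 : ℚ) • (x * g) - (ε : ℚ) • x := by
        rw [TR_apply, hu, mul_sub, QB_smul_int, two_mul, mul_add, QB_two_smul]
      rw [e1, e2, ← ha, ← hc]
      module
    rw [key]
    exact Ico.mul_mem hx (Ico.add_mem (intCast_mem Ico a) (Ico.mul_mem (intCast_mem Ico c) hg))
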